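/- arXiv:math/0209126 — 4 statements merged into one kernel-verified Lean document; each statement's English description precedes it below -/
import Mathlib

section
/- For each (r−1)-slim partition μ ∈ π_n choose a symmetric polynomial g_μ with highest partition μ, and for each partition λ ∈ π_n choose a symmetric polynomial f_λ with highest partition λ. Then the set {g_μ · 𝓕(f_λ)}, where μ ranges over (r−1)-slim partitions in π_n and λ over all partitions in π_n, is a ℂ-basis of the ring ℂ[x_1,…,x_n]^{S_n} of symmetric polynomials. In particular, ℂ[x_1,…,x_n]^{S_n} is a free module of rank (r−1)^n over the image of the Frobenius homomorphism, with generators {g_μ}. -/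
open MvPolynomial

/-- `l` is an `(r-1)`-slim partition of length at most `n`:
consecutive differences are `< r-1` and the last part is `< r-1`. -/
def IsSlim (r n : ℕ) (l : Fin n → ℕ) : Prop :=
  (∀ i : Fin n, ∀ h : (i : ℕ) + 1 < n, l i - l ⟨(i : ℕ) + 1, h⟩ < r - 1) ∧
  (∀ i : Fin n, (i : ℕ) = n - 1 → l i < r - 1)

/-- The monomial symmetric polynomial `m_λ`: the sum of the distinct monomials obtained
from `x^λ` by permuting the variables. -/
noncomputable def msym (n : ℕ) (l : Fin n → ℕ) : MvPolynomial (Fin n) ℂ :=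
  ∑ a ∈ Finset.image (fun w : Equiv.Perm (Fin n) => l ∘ w) Finset.univ,
    MvPolynomial.monomial (Finsupp.equivFunOnFinite.symm a) (1 : ℂ)

/-- Strict dominance order on partitions of equal weight:
`a < b` iff `a ≠ b`, `|a| = |b|` and all partial sums of `a` are at most those of `b`. -/
def DomLT (n : ℕ) (a b : Fin n → ℕ) : Prop :=
  a ≠ b ∧ (∑ i, a i = ∑ i, b i) ∧
  ∀ i : Fin n, ∑ j ∈ Finset.univ.filter (· ≤ i), a j
    ≤ ∑ j ∈ Finset.univ.filter (· ≤ i), b j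

/-- `g` is a symmetric polynomial with highest partition `μ`:
`g = c_μ m_μ + Σ_{ν < μ} c_ν m_ν` with `c_μ ≠ 0` (`<` the dominance order). -/
def HighestPartition (n : ℕ) (g : MvPolynomial (Fin n) ℂ) (μ : Fin n → ℕ) : Prop :=
  ∃ (S : Finset (Fin n → ℕ)) (coef : (Fin n → ℕ) → ℂ),
    μ ∈ S ∧ coef μ ≠ 0 ∧
    (∀ ν ∈ S, Antitone ν ∧ (ν = μ ∨ DomLT n ν μ)) ∧
    g = ∑ ν ∈ S, coef ν • msym n ν

/-- The Frobenius homomorphism `𝓕 : f(x_1,…,x_n) ↦ f(x_1^{r-1},…,x_n^{r-1})`. -/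
noncomputable def Frob (r n : ℕ) (f : MvPolynomial (Fin n) ℂ) : MvPolynomial (Fin n) ℂ :=
  (MvPolynomial.aeval fun i : Fin n =>
    (MvPolynomial.X i : MvPolynomial (Fin n) ℂ) ^ (r - 1)) f


/-- `d` is the lexicographically highest exponent of `p`. -/
def HasTop (n : ℕ) (p : MvPolynomial (Fin n) ℂ) (d : Fin n →₀ ℕ) : Prop :=
  coeff d p ≠ 0 ∧ ∀ e, coeff e p ≠ 0 → toLex e ≤ toLex d

lemma HasTop.degree {n : ℕ} {p : MvPolynomial (Fin n) ℂ} {d : Fin n →₀ ℕ} (h : HasTop n p d) :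
    p ≠ 0 ∧ MonomialOrder.lex.degree p = d := by
  have h0 : p ≠ 0 := by
    rintro rfl
    exact h.1 (by simp)
  refine ⟨h0, ?_⟩
  apply MonomialOrder.lex.toSyn.injective
  apply le_antisymm
  · rw [MonomialOrder.degree_le_iff]
    intro c hc
    exact h.2 c (mem_support_iff.1 hc)
  · exact MonomialOrder.le_degree (mem_support_iff.2 h.1)

lemma hasTop_degree {n : ℕ} {p : MvPolynomial (Fin n) ℂ} (h : p ≠ 0) :
    HasTop n p (MonomialOrder.lex.degree p) := by
  refine ⟨by simpa using h, ?_⟩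
  intro e he
  exact MonomialOrder.le_degree (m := MonomialOrder.lex) (mem_support_iff.2 he)

lemma HasTop.mul {n : ℕ} {p q : MvPolynomial (Fin n) ℂ} {d e : Fin n →₀ ℕ}
    (hp : HasTop n p d) (hq : HasTop n q e) : HasTop n (p * q) (d + e) := by
  obtain ⟨h1, h2⟩ := hp.degree
  obtain ⟨h3, h4⟩ := hq.degree
  rw [← h2, ← h4, ← MonomialOrder.degree_mul h1 h3]
  exact hasTop_degree (mul_ne_zero h1 h3)

lemma frob_eq (r n : ℕ) (p : MvPolynomial (Fin n) ℂ) : Frob r n p = expand (r - 1) p := rfl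

lemma lex_le_of {n : ℕ} {a b : Fin n →₀ ℕ}
    (h : ∀ i, (∀ j < i, a j = b j) → ¬ b i < a i) : toLex a ≤ toLex b := by
  rw [← not_lt, Finsupp.Lex.lt_iff]
  rintro ⟨i, h1, h2⟩
  exact h i (fun j hj => (h1 j hj).symm) h2

lemma HasTop.frob {r n : ℕ} (hr : 2 ≤ r) {p : MvPolynomial (Fin n) ℂ} {d : Fin n →₀ ℕ}
    (hp : HasTop n p d) : HasTop n (Frob r n p) ((r - 1) • d) := by
  have h0 : r - 1 ≠ 0 := by omega
  rw [frob_eq]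
  refine ⟨by rw [coeff_expand_smul _ h0]; exact hp.1, ?_⟩
  intro e he
  rw [← mem_support_iff, support_expand _ h0, Finset.mem_image] at he
  obtain ⟨c, hc, rfl⟩ := he
  have := hp.2 c (mem_support_iff.1 hc)
  have h2 : (r - 1) • toLex c ≤ (r - 1) • toLex d := nsmul_le_nsmul_right this _
  exact h2

lemma coeff_msym (n : ℕ) (l : Fin n → ℕ) (e : Fin n →₀ ℕ) :
    coeff e (msym n l) = if (∃ w : Equiv.Perm (Fin n), l ∘ w = e) then 1 else 0 := by
  classical
  rw [msym, coeff_sum]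
  simp only [coeff_monomial]
  have : ∀ a : Fin n → ℕ, (Finsupp.equivFunOnFinite.symm a = e) ↔ a = (e : Fin n → ℕ) := by
    intro a
    rw [Equiv.symm_apply_eq]
    rfl
  simp only [this]
  rw [Finset.sum_ite_eq']
  simp

lemma perm_lex_le {n : ℕ} {l : Fin n → ℕ} (hl : Antitone l) (w : Equiv.Perm (Fin n))
    (e : Fin n →₀ ℕ) (he : l ∘ w = e) :
    toLex e ≤ toLex (Finsupp.equivFunOnFinite.symm l) := by
  apply lex_le_of
  intro i h1 h2
  have he' : ∀ j, e j = l (w j) := fun j => by rw [← he]; rfl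
  simp only [he', Finsupp.coe_equivFunOnFinite_symm] at h1 h2
  set A : Finset (Fin n) := Finset.univ.filter fun k => l (w i) ≤ l k with hA
  have hlt : ∀ k ∈ A, k < i := by
    intro k hk
    by_contra hki
    have h3 := hl (not_lt.1 hki)
    have h4 := (Finset.mem_filter.1 hk).2
    omega
  have hsub : insert i A ⊆ A.map w.symm.toEmbedding := by
    intro k hk
    rw [Finset.mem_map_equiv]
    simp only [Equiv.symm_symm]
    rw [Finset.mem_insert] at hk
    rcases hk with rfl | hk
    · simp [hA]
    · have := (Finset.mem_filter.1 hk).2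
      simp only [hA, Finset.mem_filter, Finset.mem_univ, true_and]
      rw [h1 k (hlt k hk)]
      exact this
  have hc := Finset.card_le_card hsub
  rw [Finset.card_map, Finset.card_insert_of_notMem (fun h => lt_irrefl _ (hlt i h))] at hc
  omega

lemma dom_lex_lt {n : ℕ} {a b : Fin n → ℕ} (h : DomLT n a b) :
    toLex (Finsupp.equivFunOnFinite.symm a) < toLex (Finsupp.equivFunOnFinite.symm b) := by
  apply lt_of_le_of_ne
  · apply lex_le_of
    intro i h1 h2
    simp only [Finsupp.coe_equivFunOnFinite_symm] at h1 h2
    have h3 := h.2.2 i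
    apply absurd h3
    rw [not_le]
    apply Finset.sum_lt_sum
    · intro j hj
      rcases lt_or_eq_of_le (Finset.mem_filter.1 hj).2 with hj | rfl
      · exact (h1 j hj).ge
      · exact h2.le
    · exact ⟨i, by simp, h2⟩
  · intro h1
    exact h.1 (Finsupp.equivFunOnFinite.symm.injective (toLex.injective h1))

lemma HighestPartition.hasTop {n : ℕ} {p : MvPolynomial (Fin n) ℂ} {μ : Fin n → ℕ}
    (h : HighestPartition n p μ) : HasTop n p (Finsupp.equivFunOnFinite.symm μ) := by
  classical
  obtain ⟨S, c, hμ, hc, hS, rfl⟩ := h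
  constructor
  · rw [coeff_sum, Finset.sum_eq_single_of_mem μ hμ]
    · rw [coeff_smul, coeff_msym, if_pos ⟨1, rfl⟩]
      simpa using hc
    · intro ν hν hne
      rw [coeff_smul, coeff_msym, if_neg, smul_zero]
      rintro ⟨w, hw⟩
      have h1 := perm_lex_le (hS ν hν).1 w _ hw
      have h2 := dom_lex_lt ((hS ν hν).2.resolve_left hne)
      exact absurd h2 (not_lt.2 h1)
  · intro e he
    rw [coeff_sum] at he
    obtain ⟨ν, hν, hne⟩ := Finset.exists_ne_zero_of_sum_ne_zero he
    rw [coeff_smul, coeff_msym] at hne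
    have hw : ∃ w : Equiv.Perm (Fin n), ν ∘ w = e := by
      by_contra hw
      rw [if_neg hw, smul_zero] at hne
      exact hne rfl
    obtain ⟨w, hw⟩ := hw
    refine (perm_lex_le (hS ν hν).1 w _ hw).trans ?_
    rcases (hS ν hν).2 with rfl | h
    · exact le_rfl
    · exact (dom_lex_lt h).le

lemma coeff_symm {n : ℕ} {p : MvPolynomial (Fin n) ℂ} (hp : p.IsSymmetric)
    (w : Equiv.Perm (Fin n)) (e : Fin n →₀ ℕ) : coeff (e.mapDomain w) p = coeff e p := by
  conv_lhs => rw [← hp w]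
  exact coeff_rename_mapDomain _ w.injective _ _

lemma msym_symm (n : ℕ) (l : Fin n → ℕ) : (msym n l).IsSymmetric := by
  classical
  intro w
  ext e
  have he : e = (e.mapDomain w.symm).mapDomain w := by
    rw [← Finsupp.mapDomain_comp]; simp
  conv_lhs => rw [he]
  rw [coeff_rename_mapDomain _ w.injective, coeff_msym, coeff_msym]
  congr 1
  have hv : ∀ i, e.mapDomain w.symm i = e (w i) := by
    intro i
    conv_lhs => rw [← Equiv.symm_apply_apply w i]
    exact Finsupp.mapDomain_apply w.symm.injective _ _
  apply propext
  constructor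
  · rintro ⟨v, hv'⟩
    refine ⟨w.symm.trans v, ?_⟩
    funext i
    have := congrFun hv' (w.symm i)
    rw [hv] at this
    simpa using this
  · rintro ⟨v, hv'⟩
    refine ⟨w.trans v, ?_⟩
    funext i
    rw [hv, ← hv']
    rfl

lemma HighestPartition.symm {n : ℕ} {p : MvPolynomial (Fin n) ℂ} {μ : Fin n → ℕ}
    (h : HighestPartition n p μ) : p.IsSymmetric := by
  obtain ⟨S, c, hμ, hc, hS, rfl⟩ := h
  intro w
  rw [map_sum]
  refine Finset.sum_congr rfl fun ν _ => ?_
  rw [map_smul, msym_symm n ν w]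

lemma frob_symm {r n : ℕ} {p : MvPolynomial (Fin n) ℂ} (hp : p.IsSymmetric) :
    (Frob r n p).IsSymmetric := by
  intro w
  rw [frob_eq, rename_expand, hp w]

lemma HasTop.antitone {n : ℕ} {p : MvPolynomial (Fin n) ℂ} (hs : p.IsSymmetric)
    {d : Fin n →₀ ℕ} (h : HasTop n p d) : Antitone (d : Fin n → ℕ) := by
  intro i j hij
  by_contra hlt
  rw [not_le] at hlt
  have hij' : i < j := lt_of_le_of_ne hij (by rintro rfl; exact lt_irrefl _ hlt)
  set e := d.mapDomain (Equiv.swap i j) with he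
  have hv : ∀ k, e k = d (Equiv.swap i j k) := by
    intro k
    conv_lhs => rw [← Equiv.swap_apply_self i j k]
    exact Finsupp.mapDomain_apply (Equiv.swap i j).injective _ _
  have h1 := h.2 e (by rw [he, coeff_symm hs]; exact h.1)
  apply absurd h1
  rw [not_le, Finsupp.Lex.lt_iff]
  refine ⟨i, ?_, ?_⟩
  · intro k hk
    show d k = e k
    rw [hv, Equiv.swap_apply_of_ne_of_ne hk.ne (hk.trans hij').ne]
  · show d i < e i
    rw [hv, Equiv.swap_apply_left]
    exact hlt

lemma slim_exists {r n : ℕ} (hr : 2 ≤ r) (a : Fin n → ℕ) (ha : Antitone a) :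
    ∃ μ l : Fin n → ℕ, (Antitone μ ∧ IsSlim r n μ) ∧ Antitone l ∧
      ∀ i, μ i + (r - 1) * l i = a i := by
  set b : ℕ → ℕ := fun i => if h : i < n then a ⟨i, h⟩ else 0 with hb
  have hbm : Antitone b := by
    intro i j hij
    simp only [hb]
    by_cases hj : j < n
    · rw [dif_pos hj, dif_pos (lt_of_le_of_lt hij hj)]
      exact ha hij
    · rw [dif_neg hj]; exact Nat.zero_le _
  have hbn : b n = 0 := by simp [hb]
  set c : ℕ → ℕ := fun j => b j - b (j + 1) with hc
  have hsum : ∀ k i, i + k = n → ∑ j ∈ Finset.Ico i n, c j = b i := by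
    intro k
    induction k with
    | zero =>
      intro i hi
      have : i = n := by omega
      subst this
      simp [hbn]
    | succ k ih =>
      intro i hi
      rw [Finset.sum_eq_sum_Ico_succ_bot (by omega), ih (i + 1) (by omega)]
      have := hbm (Nat.le_succ i)
      simp only [hc, Nat.succ_eq_add_one] at *
      omega
  have hanti : ∀ F : ℕ → ℕ, Antitone (fun i : Fin n => ∑ j ∈ Finset.Ico (i : ℕ) n, F j) := by
    intro F i j hij
    apply Finset.sum_le_sum_of_subset
    exact Finset.Ico_subset_Ico_left hij
  refine ⟨fun i => ∑ j ∈ Finset.Ico (i : ℕ) n, c j % (r - 1),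
    fun i => ∑ j ∈ Finset.Ico (i : ℕ) n, c j / (r - 1), ⟨hanti _, ?_, ?_⟩, hanti _, ?_⟩
  · intro i h
    simp only
    rw [Finset.sum_eq_sum_Ico_succ_bot i.2, Nat.add_sub_cancel]
    exact Nat.mod_lt _ (by omega)
  · intro i h
    simp only
    rw [Finset.sum_eq_sum_Ico_succ_bot i.2, h]
    have : n - 1 + 1 = n := by have := i.2; omega
    rw [this]
    simp only [Finset.Ico_self, Finset.sum_empty, add_zero]
    exact Nat.mod_lt _ (by omega)
  · intro i
    simp only
    rw [Finset.mul_sum, ← Finset.sum_add_distrib]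
    simp only [Nat.mod_add_div]
    rw [hsum (n - i) i (by have := i.2; omega)]
    simp [hb]

lemma div_unique' {q x y s t : ℕ} (hx : x < q) (hy : y < q) (h : x + q * s = y + q * t) :
    x = y ∧ s = t := by
  have h1 : x = y := by
    have := congrArg (· % q) h
    simpa [Nat.mod_eq_of_lt hx, Nat.mod_eq_of_lt hy] using this
  subst h1
  exact ⟨rfl, Nat.eq_of_mul_eq_mul_left (by omega) (by omega : q * s = q * t)⟩

lemma slim_unique {r n : ℕ} (hr : 2 ≤ r) {μ l μ' l' : Fin n → ℕ}
    (h1 : Antitone μ ∧ IsSlim r n μ) (h2 : Antitone μ' ∧ IsSlim r n μ')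
    (h : ∀ i, μ i + (r - 1) * l i = μ' i + (r - 1) * l' i) : μ = μ' ∧ l = l' := by
  have key : ∀ k, ∀ i : Fin n, (i : ℕ) + 1 + k = n → μ i = μ' i ∧ l i = l' i := by
    intro k
    induction k with
    | zero =>
      intro i hi
      exact div_unique' (h1.2.2 i (by omega)) (h2.2.2 i (by omega)) (h i)
    | succ k ih =>
      intro i hi
      have hi' : (i : ℕ) + 1 < n := by omega
      have hm := (ih ⟨i + 1, hi'⟩ (by simp only; omega)).1
      have a1 := h1.2.1 i hi'
      have a2 := h2.2.1 i hi'
      have hle : i ≤ ⟨i + 1, hi'⟩ := by rw [Fin.le_def]; simp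
      have b1 := h1.1 hle
      have b2 := h2.1 hle
      have e := h i
      have := div_unique' (s := l i) (t := l' i) a1 a2 (by omega)
      exact ⟨by omega, this.2⟩
  exact ⟨funext fun i => (key (n - 1 - i) i (by have := i.2; omega)).1,
    funext fun i => (key (n - 1 - i) i (by have := i.2; omega)).2⟩

lemma linInd_of_top {n : ℕ} {ι : Type*} (B : ι → MvPolynomial (Fin n) ℂ) (D : ι → Fin n →₀ ℕ)
    (hD : Function.Injective D) (hB : ∀ i, HasTop n (B i) (D i)) : LinearIndependent ℂ B := by
  classical
  rw [linearIndependent_iff']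
  intro s c hs
  by_contra hne
  push Not at hne
  obtain ⟨i0, hi0, hc0⟩ := hne
  obtain ⟨i, hi, hmax⟩ := Finset.exists_max_image (s.filter fun i => c i ≠ 0)
    (fun i => toLex (D i)) ⟨i0, by simp [hi0, hc0]⟩
  rw [Finset.mem_filter] at hi
  have := congrArg (coeff (D i)) hs
  rw [coeff_sum, Finset.sum_eq_single_of_mem i hi.1] at this
  · rw [coeff_smul, coeff_zero, smul_eq_mul] at this
    exact mul_ne_zero hi.2 (hB i).1 this
  · intro j hj hji
    rw [coeff_smul]
    by_contra hcon
    rw [smul_eq_mul] at hcon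
    have h1 := hmax j (by simp [hj, left_ne_zero_of_mul hcon])
    have h2 := (hB j).2 _ (right_ne_zero_of_mul hcon)
    exact hji (hD (toLex.injective (le_antisymm h1 h2)))

lemma span_of_top {n : ℕ} {ι : Type*} (B : ι → MvPolynomial (Fin n) ℂ) (D : ι → Fin n →₀ ℕ)
    (hD : ∀ d : Fin n →₀ ℕ, Antitone (d : Fin n → ℕ) → ∃ i, D i = d)
    (hB : ∀ i, HasTop n (B i) (D i)) (hs : ∀ i, (B i).IsSymmetric) :
    ∀ s : (MonomialOrder.lex (σ := Fin n)).syn, ∀ p : MvPolynomial (Fin n) ℂ, p.IsSymmetric →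
      (∀ e, coeff e p ≠ 0 → MonomialOrder.lex.toSyn e < s) →
      p ∈ Submodule.span ℂ (Set.range B) := by
  intro s
  induction s using WellFoundedLT.induction with
  | ind s ih =>
    intro p hp hlt
    by_cases h0 : p = 0
    · rw [h0]; exact Submodule.zero_mem _
    have ht := hasTop_degree h0
    obtain ⟨i, hi⟩ := hD _ (ht.antitone hp)
    have hBi := hB i
    rw [hi] at hBi
    set d := MonomialOrder.lex.degree p
    set c := coeff d p / coeff d (B i) with hc
    have hmem : p - c • B i ∈ Submodule.span ℂ (Set.range B) := by
      apply ih (MonomialOrder.lex.toSyn d) (hlt d ht.1)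
      · intro w
        rw [map_sub, map_smul, hp w, hs i w]
      · intro e he
        rw [coeff_sub, coeff_smul, smul_eq_mul] at he
        apply lt_of_le_of_ne
        · by_cases hpe : coeff e p = 0
          · refine hBi.2 e ?_
            intro h
            rw [hpe, h] at he
            simp at he
          · exact ht.2 e hpe
        · intro hed
          have := MonomialOrder.lex.toSyn.injective hed
          subst this
          apply he
          rw [hc, div_mul_cancel₀ _ hBi.1, sub_self]
    have : p = (p - c • B i) + c • B i := by ring
    rw [this]
    exact Submodule.add_mem _ hmem
      (Submodule.smul_mem _ _ (Submodule.subset_span ⟨i, rfl⟩))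

/-- choosing, for each `(r-1)`-slim `μ ∈ π_n`, a symmetric polynomial `g_μ`
with highest partition `μ` and, for each `λ ∈ π_n`, a symmetric polynomial `f_λ` with
highest partition `λ`, the products `g_μ · 𝓕(f_λ)` form a `ℂ`-basis of the ring of
symmetric polynomials `ℂ[x_1,…,x_n]^{S_n}`. -/
theorem slim_times_frobenius_basis_of_symmetric_polynomials
    (r n : ℕ) (hr : 2 ≤ r) (hn : 1 ≤ n)
    (g : {l : Fin n → ℕ // Antitone l ∧ IsSlim r n l} → MvPolynomial (Fin n) ℂ)
    (hg : ∀ μ, HighestPartition n (g μ) μ.1)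
    (f : {l : Fin n → ℕ // Antitone l} → MvPolynomial (Fin n) ℂ)
    (hf : ∀ l, HighestPartition n (f l) l.1) :
    LinearIndependent ℂ
      (fun p : {l : Fin n → ℕ // Antitone l ∧ IsSlim r n l} ×
          {l : Fin n → ℕ // Antitone l} => g p.1 * Frob r n (f p.2)) ∧
    Submodule.span ℂ
      (Set.range fun p : {l : Fin n → ℕ // Antitone l ∧ IsSlim r n l} ×
          {l : Fin n → ℕ // Antitone l} => g p.1 * Frob r n (f p.2)) =
      Submodule.span ℂ {h : MvPolynomial (Fin n) ℂ | h.IsSymmetric} := by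
  set B := fun p : {l : Fin n → ℕ // Antitone l ∧ IsSlim r n l} ×
          {l : Fin n → ℕ // Antitone l} => g p.1 * Frob r n (f p.2) with hBdef
  set D : {l : Fin n → ℕ // Antitone l ∧ IsSlim r n l} × {l : Fin n → ℕ // Antitone l} →
      Fin n →₀ ℕ := fun p => Finsupp.equivFunOnFinite.symm p.1.1 +
        (r - 1) • Finsupp.equivFunOnFinite.symm p.2.1 with hDdef
  have hB : ∀ i, HasTop n (B i) (D i) := fun i =>
    (hg i.1).hasTop.mul ((hf i.2).hasTop.frob hr)
  have hs : ∀ i, (B i).IsSymmetric := by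
    intro i w
    simp only [hBdef, map_mul]
    rw [(hg i.1).symm w, frob_symm (hf i.2).symm w]
  have hDa : ∀ p i, D p i = p.1.1 i + (r - 1) * p.2.1 i := by
    intro p i
    simp [hDdef]
  refine ⟨linInd_of_top B D ?_ hB, le_antisymm ?_ ?_⟩
  · intro p p' h
    have := slim_unique hr (l := p.2.1) (l' := p'.2.1) p.1.2 p'.1.2 (fun i => by
      rw [← hDa, ← hDa, h])
    exact Prod.ext (Subtype.ext this.1) (Subtype.ext this.2)
  · apply Submodule.span_mono
    rintro _ ⟨i, rfl⟩
    exact hs i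
  · rw [Submodule.span_le]
    intro p hp
    by_cases h0 : p = 0
    · rw [h0]; exact Submodule.zero_mem _
    have hsurj : ∀ d : Fin n →₀ ℕ, Antitone (d : Fin n → ℕ) → ∃ i, D i = d := by
      intro d hd
      obtain ⟨μ, l, h1, h2, h3⟩ := slim_exists hr d hd
      refine ⟨(⟨μ, h1⟩, ⟨l, h2⟩), ?_⟩
      ext i
      rw [hDa]
      exact h3 i
    have ht := hasTop_degree h0
    obtain ⟨i, hi⟩ := hsurj _ (ht.antitone hp)
    have hBi := hB i
    rw [hi] at hBi
    refine span_of_top B D hsurj hB hs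
      (MonomialOrder.lex.toSyn (MonomialOrder.lex.degree p + Finsupp.single ⟨0, hn⟩ 1)) p hp ?_
    intro e he
    refine lt_of_le_of_lt (MonomialOrder.le_degree (mem_support_iff.2 he)) ?_
    rw [map_add]
    refine lt_add_of_pos_right _ ?_
    rw [MonomialOrder.toSyn_lt_iff_ne_zero]
    simp
end

section
/- Let f ∈ F_n^{(k,r)} be a symmetric polynomial satisfying the wheel condition, let ρ ∈ {0,1,…,n} and t̃ ∈ ℂ. Then the symmetric polynomial D_n^ρ(q, t̃) f again satisfies the wheel condition, i.e., D_n^ρ(q, t̃) f ∈ F_n^{(k,r)}. Equivalently, the polynomial h = Σ_{|I|=ρ} t̃^{ρ(ρ−1)/2} ∏_{i∈I, j∉I} (t̃ x_i − x_j) · ∏_{(i,j), i≠j, not (i∈I and j∉I)} (x_i − x_j) · (T_I f), which equals ∏_{i≠j}(x_i − x_j) · D_n^ρ(q,t̃) f, vanishes identically on every plane x_i = t^{i−1} q^{s_i} x_1 (2 ≤ i ≤ k+1), s_2,…,s_{k+1} ∈ {0,…,r−2}. -/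
open MvPolynomial

/-- if `f ∈ F_n^{(k,r)}` satisfies the wheel condition, then so does
`D_n^ρ(q,t̃) f` for every `ρ ∈ {0,…,n}` and `t̃ ∈ ℂ`.  This is stated in the equivalent
denominator-cleared form: the polynomial
`h = Σ_{|I|=ρ} t̃^{ρ(ρ-1)/2} ∏_{i∈I,j∉I}(t̃x_i - x_j) · ∏_{(i,j): i≠j, ¬(i∈I ∧ j∉I)}(x_i - x_j) · T_I f`,
which equals `∏_{i≠j}(x_i - x_j) · D_n^ρ(q,t̃) f`, vanishes identically on every plane
`x_i = t^{i-1} q^{s_i} x_1` (`2 ≤ i ≤ k+1`), `s_i ∈ {0,…,r-2}`. -/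
theorem macdonald_operator_preserves_wheel_condition
    (k r n : ℕ) (hk : 0 < k) (hr : 2 ≤ r) (hcop : Nat.Coprime (k + 1) (r - 1))
    (t q : ℂ) (ht : IsPrimitiveRoot t (k + 1)) (hq : IsPrimitiveRoot q (r - 1))
    (hn : k + 1 ≤ n)
    (f : MvPolynomial (Fin n) ℂ) (hsym : f.IsSymmetric)
    (hf : ∀ (s : ℕ → ℕ), (∀ i, s i ≤ r - 2) → ∀ (x : ℂ) (y : Fin n → ℂ),
      MvPolynomial.eval
        (fun j : Fin n => if (j : ℕ) = 0 then x
          else if (j : ℕ) ≤ k then t ^ (j : ℕ) * q ^ (s (j : ℕ)) * x else y j) f = 0)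
    (ρ : ℕ) (hρ : ρ ≤ n) (t' : ℂ) :
    ∀ (s : ℕ → ℕ), (∀ i, s i ≤ r - 2) → ∀ (x : ℂ) (y : Fin n → ℂ),
      MvPolynomial.eval
        (fun j : Fin n => if (j : ℕ) = 0 then x
          else if (j : ℕ) ≤ k then t ^ (j : ℕ) * q ^ (s (j : ℕ)) * x else y j)
        (∑ I ∈ Finset.powersetCard ρ (Finset.univ : Finset (Fin n)),
          (t' ^ (ρ * (ρ - 1) / 2)) •
            ((∏ p ∈ Finset.univ.filter
                (fun p : Fin n × Fin n => p.1 ∈ I ∧ p.2 ∉ I),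
                (MvPolynomial.C t' * MvPolynomial.X p.1 - MvPolynomial.X p.2)) *
              (∏ p ∈ Finset.univ.filter
                (fun p : Fin n × Fin n => p.1 ≠ p.2 ∧ ¬(p.1 ∈ I ∧ p.2 ∉ I)),
                (MvPolynomial.X p.1 - MvPolynomial.X p.2)) *
              (MvPolynomial.aeval
                (fun i : Fin n => if i ∈ I then MvPolynomial.C q * MvPolynomial.X i
                  else MvPolynomial.X i) f))) = 0 := by
  classical
  intro s hs x y
  rw [map_sum]
  refine Finset.sum_eq_zero fun I _ => ?_
  rw [MvPolynomial.smul_eval, map_mul]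
  refine mul_eq_zero_of_right _ (mul_eq_zero_of_right _ ?_)
  have hqr : q ^ (r - 1) = 1 := hq.pow_eq_one
  -- the exponent by which the shift multiplies each coordinate
  let e : ℕ → ℕ := fun j => if ∃ i ∈ I, (i : ℕ) = j then 1 else 0
  have he : ∀ i : Fin n, e i = if i ∈ I then 1 else 0 := by
    intro i
    simp only [e]
    congr 1
    simp only [eq_iff_iff]
    constructor
    · rintro ⟨a, ha, hai⟩
      rwa [← Fin.ext hai]
    · intro h
      exact ⟨i, h, rfl⟩
  have key := hf (fun j => (s j + e j + (r - 2) * e 0) % (r - 1))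
    (fun j => by
      have := Nat.mod_lt (s j + e j + (r - 2) * e 0) (show 0 < r - 1 by omega)
      show _ % _ ≤ _
      omega)
    (q ^ e 0 * x) (fun j => q ^ e j * y j)
  have hmod : ∀ m : ℕ, q ^ (m % (r - 1)) = q ^ m := by
    intro m
    conv_rhs => rw [← Nat.mod_add_div m (r - 1), pow_add, pow_mul, hqr, one_pow, mul_one]
  rw [← key]
  rw [MvPolynomial.aeval_def, MvPolynomial.algebraMap_eq, MvPolynomial.eval_eval₂,
    MvPolynomial.eval, MvPolynomial.coe_eval₂Hom]
  congr 1
  · ext z; simp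
  funext j
  have hshift : ∀ z : Fin n → ℂ, MvPolynomial.eval z
      (if j ∈ I then MvPolynomial.C q * MvPolynomial.X j else MvPolynomial.X j)
      = q ^ e j * z j := by
    intro z
    rw [he j]
    split_ifs <;> simp
  have h2 := hshift (fun j : Fin n => if (j : ℕ) = 0 then x
          else if (j : ℕ) ≤ k then t ^ (j : ℕ) * q ^ (s (j : ℕ)) * x else y j)
  refine h2.trans ?_
  by_cases h0 : (j : ℕ) = 0
  · simp [h0]
  by_cases h1 : (j : ℕ) ≤ k
  · simp only [h0, h1, if_true, if_false]
    rw [hmod]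
    have h3 : q ^ (s j + e j + (r - 2) * e 0) * q ^ e 0 = q ^ e j * q ^ s j := by
      have : s j + e j + (r - 2) * e 0 + e 0 = e j + s j + (r - 1) * e 0 := by
        obtain ⟨m, rfl⟩ : ∃ m, r = m + 2 := ⟨r - 2, by omega⟩
        simp only [Nat.add_sub_cancel, show m + 2 - 1 = m + 1 by omega]
        ring
      rw [← pow_add, this, pow_add, pow_add, pow_mul q (r - 1), hqr, one_pow, mul_one]
    linear_combination (-(t ^ (j : ℕ) * x)) * h3
  · simp [h0, h1]
end

section
/- Let h = Σ_{i=1}^s f_i g_i be a symmetric polynomial, where g_1,…,g_s are symmetric polynomials whose highest partitions are (r−1)-slim and pairwise distinct, and each f_i = 𝓕(f̃_i) is the Frobenius image of a symmetric polynomial f̃_i. Then h ∈ F_n^{(k,r)} if and only if f̃_i ∈ F_n^{(k,2)} for every i = 1,…,s. -/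
open MvPolynomial

namespace SepFrob

open MonomialOrder

/-- The exponent vector of a function. -/
noncomputable def ex {n : ℕ} (a : Fin n → ℕ) : Fin n →₀ ℕ := Finsupp.equivFunOnFinite.symm a

theorem ex_apply {n : ℕ} (a : Fin n → ℕ) (i : Fin n) : ex a i = a i := rfl

theorem ex_inj {n : ℕ} {a b : Fin n → ℕ} : ex a = ex b ↔ a = b :=
  Finsupp.equivFunOnFinite.symm.injective.eq_iff

theorem lex_of_psum {n : ℕ} {a b : Fin n → ℕ}
    (h : ∀ i : Fin n, ∑ j ∈ Finset.univ.filter (· ≤ i), a j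
      ≤ ∑ j ∈ Finset.univ.filter (· ≤ i), b j) :
    ex a ≼[lex] ex b := by
  rw [lex_le_iff]
  by_contra hc
  rw [not_le, Finsupp.Lex.lt_iff] at hc
  obtain ⟨i, h1, h2⟩ := hc
  have h1 : ∀ j, j < i → b j = a j := h1
  have h2 : b i < a i := h2
  refine absurd (h i) (not_le.2 ?_)
  apply Finset.sum_lt_sum
  · intro j hj
    rw [Finset.mem_filter] at hj
    rcases hj.2.lt_or_eq with hlt | heq
    · exact (h1 j hlt).le
    · rw [heq]; exact h2.le
  · exact ⟨i, by simp, h2⟩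

theorem psum_perm {n : ℕ} {ν : Fin n → ℕ} (hν : Antitone ν) (w : Equiv.Perm (Fin n)) (i : Fin n) :
    ∑ j ∈ Finset.univ.filter (· ≤ i), (ν ∘ w) j ≤ ∑ j ∈ Finset.univ.filter (· ≤ i), ν j := by
  have hi : Antitone (fun j : Fin n => if j ≤ i then (1 : ℤ) else 0) := by
    intro a b hab
    dsimp only
    split_ifs with h1 h2
    · exact le_rfl
    · exact absurd (hab.trans h1) h2
    · exact zero_le_one
    · exact le_rfl
  have hν' : Antitone (fun j : Fin n => (ν j : ℤ)) := fun a b hab => by simpa using hν hab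
  have := (hi.monovary hν').sum_mul_comp_perm_le_sum_mul (σ := w)
  zify
  simpa [Finset.sum_filter] using this

theorem perm_eq {n : ℕ} {ν μ : Fin n → ℕ} (hν : Antitone ν) (hμ : Antitone μ)
    (w : Equiv.Perm (Fin n)) (h : ν ∘ w = μ) : ν = μ := by
  have h' : μ ∘ w.symm = ν := by
    rw [← h]; ext x; simp
  have h1 : ex μ ≼[lex] ex ν := by
    apply lex_of_psum; rw [← h]; exact psum_perm hν w
  have h2 : ex ν ≼[lex] ex μ := by
    apply lex_of_psum; rw [← h']; exact psum_perm hμ _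
  exact ex_inj.1 ((lex : MonomialOrder (Fin n)).toSyn.injective (le_antisymm h2 h1))

theorem coeff_msym {n : ℕ} (ν : Fin n → ℕ) (a : Fin n →₀ ℕ) [Decidable (∃ w : Equiv.Perm (Fin n), ν ∘ w = a)] :
    (msym n ν).coeff a = if ∃ w : Equiv.Perm (Fin n), ν ∘ w = a then 1 else 0 := by
  have : ∀ b : Fin n → ℕ, Finsupp.equivFunOnFinite.symm b = a ↔ b = a := by
    intro b
    rw [Equiv.symm_apply_eq]; rfl
  unfold msym
  simp only [coeff_sum, coeff_monomial, this]
  rw [Finset.sum_ite_eq']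
  simp

theorem isSymmetric_msym {n : ℕ} (ν : Fin n → ℕ) : (msym n ν).IsSymmetric := by
  classical
  intro e
  ext a
  have ha : a = Finsupp.mapDomain e (Finsupp.mapDomain e.symm a) := by
    rw [← Finsupp.mapDomain_comp]; simp
  conv_lhs => rw [ha]
  rw [coeff_rename_mapDomain _ e.injective, coeff_msym, coeff_msym]
  have h2 : ∀ x, (Finsupp.mapDomain e.symm a) x = a (e x) := by
    intro x
    conv_lhs => rw [← e.symm_apply_apply x]
    rw [Finsupp.mapDomain_apply e.symm.injective]
  congr 1
  apply propext
  constructor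
  · rintro ⟨w, hw⟩
    refine ⟨e.symm.trans w, ?_⟩
    ext x
    have := congrFun hw (e.symm x)
    rw [h2] at this
    simpa using this
  · rintro ⟨w, hw⟩
    refine ⟨e.trans w, ?_⟩
    ext x
    have := congrFun hw (e x)
    rw [h2]
    simpa using this

theorem isSymmetric_highest {n : ℕ} {g : MvPolynomial (Fin n) ℂ} {μ : Fin n → ℕ}
    (h : HighestPartition n g μ) : g.IsSymmetric := by
  obtain ⟨S, c, -, -, -, rfl⟩ := h
  exact (symmetricSubalgebra (Fin n) ℂ).sum_mem
    (fun ν _ => (symmetricSubalgebra (Fin n) ℂ).smul_mem (isSymmetric_msym ν) _)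

theorem highest_msym {n : ℕ} {μ : Fin n → ℕ} (h : Antitone μ) :
    HighestPartition n (msym n μ) μ :=
  ⟨{μ}, fun _ => 1, by simp, by simp, by simpa using h, by simp⟩

theorem highest_degree {n : ℕ} {g : MvPolynomial (Fin n) ℂ} {μ : Fin n → ℕ}
    (h : HighestPartition n g μ) : g ≠ 0 ∧ lex.degree g = ex μ := by
  classical
  obtain ⟨S, c, hS, hc, hν, hg⟩ := h
  have hco : ∀ a : Fin n →₀ ℕ, g.coeff a =
      ∑ ν ∈ S, c ν * if ∃ w : Equiv.Perm (Fin n), ν ∘ w = a then 1 else 0 := by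
    intro a
    rw [hg, coeff_sum]
    apply Finset.sum_congr rfl
    intro ν _
    rw [coeff_smul, coeff_msym, smul_eq_mul]
  have hμ : g.coeff (ex μ) ≠ 0 := by
    rw [hco, Finset.sum_eq_single μ]
    · rw [if_pos ⟨1, rfl⟩, mul_one]; exact hc
    · intro ν hνS hne
      rw [if_neg, mul_zero]
      rintro ⟨w, hw⟩
      exact hne (perm_eq (hν ν hνS).1 (hν μ hS).1 w hw)
    · exact fun h => absurd hS h
  refine ⟨fun h0 => hμ (by rw [h0, coeff_zero]), ?_⟩
  apply (lex : MonomialOrder (Fin n)).toSyn.injective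
  apply le_antisymm
  · rw [degree_le_iff]
    intro a ha
    rw [mem_support_iff, hco] at ha
    obtain ⟨ν, hνS, hne⟩ := Finset.exists_ne_zero_of_sum_ne_zero ha
    have hw : ∃ w : Equiv.Perm (Fin n), ν ∘ w = a := by
      by_contra hcon
      rw [if_neg hcon, mul_zero] at hne
      exact hne rfl
    obtain ⟨w, hw⟩ := hw
    have : a = ex (ν ∘ w) := by
      ext x; rw [hw]; rfl
    rw [this]
    apply lex_of_psum
    intro i
    refine (psum_perm (hν ν hνS).1 w i).trans ?_
    rcases (hν ν hνS).2 with rfl | hd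
    · exact le_rfl
    · exact hd.2.2 i
  · exact le_degree (mem_support_iff.2 hμ)

theorem degree_antitone {n : ℕ} {f : MvPolynomial (Fin n) ℂ} (hf : f.IsSymmetric) (h0 : f ≠ 0) :
    Antitone (lex.degree f) := by
  classical
  intro i j hij
  by_contra hlt
  rw [not_le] at hlt
  set l := lex.degree f with hl
  have hne : i ≠ j := by rintro rfl; exact lt_irrefl _ hlt
  have hlt' : i < j := lt_of_le_of_ne hij hne
  set e := Equiv.swap i j
  have hmem : Finsupp.mapDomain e l ∈ f.support := by
    rw [mem_support_iff, ← hf e, coeff_rename_mapDomain _ e.injective, hl]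
    exact coeff_degree_ne_zero_iff.2 h0
  have hap : ∀ x, Finsupp.mapDomain e l x = l (e x) := by
    intro x
    have hx : x = e (e x) := by simp [e]
    conv_lhs => rw [hx]
    exact Finsupp.mapDomain_apply e.injective _ _
  have hle := le_degree (m := lex) hmem
  rw [← hl, lex_le_iff] at hle
  refine absurd hle (not_le.2 ?_)
  rw [Finsupp.Lex.lt_iff]
  refine ⟨i, ?_, ?_⟩
  · intro x hx
    change l x = Finsupp.mapDomain e l x
    rw [hap, Equiv.swap_apply_of_ne_of_ne hx.ne (hx.trans hlt').ne]
  · change l i < Finsupp.mapDomain e l i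
    rw [hap, Equiv.swap_apply_left]
    exact hlt

/-- Tail sums. -/
def T {n : ℕ} (d : Fin n → ℕ) (i : Fin n) : ℕ := ∑ j ∈ Finset.univ.filter (i ≤ ·), d j

theorem T_antitone {n : ℕ} (d : Fin n → ℕ) : Antitone (T d) := by
  intro i j hij
  apply Finset.sum_le_sum_of_subset
  intro x hx
  rw [Finset.mem_filter] at hx ⊢
  exact ⟨hx.1, hij.trans hx.2⟩

/-- Consecutive differences. -/
def dif {n : ℕ} (l : Fin n → ℕ) (i : Fin n) : ℕ :=
  if h : (i : ℕ) + 1 < n then l i - l ⟨(i : ℕ) + 1, h⟩ else l i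

theorem T_dif {n : ℕ} {l : Fin n → ℕ} (hl : Antitone l) : T (dif l) = l := by
  have key : ∀ m : ℕ, ∀ i : Fin n, (i : ℕ) + m + 1 = n → T (dif l) i = l i := by
    intro m
    induction m with
    | zero =>
      intro i hi
      have : Finset.univ.filter (i ≤ ·) = {i} := by
        ext x; simp only [Finset.mem_filter, Finset.mem_univ, true_and, Finset.mem_singleton]
        rw [Fin.le_def, Fin.ext_iff]; omega
      rw [T, this, Finset.sum_singleton, dif, dif_neg (by omega)]
    | succ m ih =>
      intro i hi
      have hi' : (i : ℕ) + 1 < n := by omega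
      have : Finset.univ.filter (i ≤ ·) =
          insert i (Finset.univ.filter ((⟨(i : ℕ) + 1, hi'⟩ : Fin n) ≤ ·)) := by
        ext x; simp only [Finset.mem_filter, Finset.mem_univ, true_and, Finset.mem_insert]
        rw [Fin.le_def, Fin.ext_iff, Fin.le_def]; dsimp only; omega
      have h2 := ih ⟨(i : ℕ) + 1, hi'⟩ (by dsimp only; omega)
      rw [T] at h2
      rw [T, this, Finset.sum_insert, h2, dif, dif_pos hi']
      · have : l ⟨(i : ℕ) + 1, hi'⟩ ≤ l i := hl (by rw [Fin.le_def]; dsimp only; omega)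
        omega
      · simp [Fin.le_def]
  ext i
  exact key (n - 1 - i) i (by omega)

theorem slim_dif {r n : ℕ} {l : Fin n → ℕ} (h : IsSlim r n l) (i : Fin n) : dif l i < r - 1 := by
  unfold dif
  split_ifs with hi
  · exact h.1 i hi
  · exact h.2 i (by omega)

theorem Frob_eq (r n : ℕ) (f : MvPolynomial (Fin n) ℂ) : Frob r n f = expand (r - 1) f := rfl

theorem eval_Frob (r n : ℕ) (f : MvPolynomial (Fin n) ℂ) (p : Fin n → ℂ) :
    eval p (Frob r n f) = eval (fun i => p i ^ (r - 1)) f := by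
  rw [Frob_eq, eval_expand]; rfl

theorem isSymmetric_Frob (r n : ℕ) {f : MvPolynomial (Fin n) ℂ} (hf : f.IsSymmetric) :
    (Frob r n f).IsSymmetric := by
  intro e
  rw [Frob_eq, rename_expand, hf e]

theorem degree_Frob {r n : ℕ} (hr : 2 ≤ r) {f : MvPolynomial (Fin n) ℂ} (h0 : f ≠ 0) :
    Frob r n f ≠ 0 ∧ lex.degree (Frob r n f) = (r - 1) • lex.degree f := by
  classical
  have hr0 : r - 1 ≠ 0 := by omega
  refine ⟨(expand_ne_zero (by omega)).2 h0, ?_⟩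
  apply (lex : MonomialOrder (Fin n)).toSyn.injective
  apply le_antisymm
  · rw [degree_le_iff]
    intro a ha
    rw [Frob_eq, support_expand _ hr0, Finset.mem_image] at ha
    obtain ⟨b, hb, rfl⟩ := ha
    rw [map_nsmul, map_nsmul]
    exact nsmul_le_nsmul_right (le_degree hb) _
  · apply le_degree
    rw [mem_support_iff, Frob_eq, coeff_expand_smul _ hr0]
    exact coeff_degree_ne_zero_iff.2 h0

/-- The evaluations of symmetric polynomials lie in the span of the slim family. -/
theorem sym_mem_span {r n : ℕ} (hr : 2 ≤ r) {A : Type*} (p : A → Fin n → ℂ) (zN : Fin n → ℂ)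
    (hp : ∀ a i, p a i ^ (r - 1) = zN i)
    (G : (Fin n → Fin (r - 1)) → MvPolynomial (Fin n) ℂ)
    (hG : ∀ d, HighestPartition n (G d) (T (fun i => (d i : ℕ))))
    (f : MvPolynomial (Fin n) ℂ) (hf : f.IsSymmetric) :
    (fun a => eval (p a) f) ∈
      Submodule.span ℂ (Set.range fun d : Fin n → Fin (r - 1) => fun a => eval (p a) (G d)) := by
  generalize hV : Submodule.span ℂ
    (Set.range fun d : Fin n → Fin (r - 1) => fun a => eval (p a) (G d)) = V
  have main : ∀ l : (lex : MonomialOrder (Fin n)).syn, ∀ f : MvPolynomial (Fin n) ℂ,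
      f.IsSymmetric → lex.toSyn (lex.degree f) = l → (fun a => eval (p a) f) ∈ V := by
    intro l
    induction l using WellFoundedLT.induction with
    | ind l ih =>
    intro f hf hl
    by_cases h0 : f = 0
    · subst h0
      simp only [map_zero]
      exact V.zero_mem
    have hanti := degree_antitone hf h0
    set D := dif (lex.degree f) with hD
    have hTD : T D = lex.degree f := T_dif hanti
    let d : Fin n → Fin (r - 1) := fun i => ⟨D i % (r - 1), Nat.mod_lt _ (by omega)⟩
    let e : Fin n → ℕ := fun i => D i / (r - 1)
    obtain ⟨hm0, hmd⟩ := highest_degree (highest_msym (T_antitone e))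
    obtain ⟨hg0, hgd⟩ := highest_degree (hG d)
    obtain ⟨hF0, hFd⟩ := degree_Frob hr hm0
    set P := Frob r n (msym n (T e)) * G d with hP
    have hP0 : P ≠ 0 := mul_ne_zero hF0 hg0
    have hPd : lex.degree P = lex.degree f := by
      rw [hP, degree_mul hF0 hg0, hFd, hmd, hgd]
      ext i
      rw [← hTD]
      simp only [Finsupp.add_apply, Finsupp.smul_apply, ex_apply, smul_eq_mul, T, Finset.mul_sum,
        ← Finset.sum_add_distrib]
      exact Finset.sum_congr rfl fun j _ => Nat.div_add_mod _ _
    have hPs : P.IsSymmetric :=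
      (isSymmetric_Frob r n (isSymmetric_msym _)).mul (isSymmetric_highest (hG d))
    have hPV : (fun a => eval (p a) P) ∈ V := by
      have : (fun a => eval (p a) P) =
          eval zN (msym n (T e)) • (fun a => eval (p a) (G d)) := by
        ext a
        rw [hP, map_mul, eval_Frob]
        simp only [hp, Pi.smul_apply, smul_eq_mul]
      rw [this, ← hV]
      exact Submodule.smul_mem _ _ (Submodule.subset_span ⟨d, rfl⟩)
    set c := lex.leadingCoeff f / lex.leadingCoeff P with hc
    set f' := f - c • P with hf'
    have hf's : f'.IsSymmetric := hf.sub (hPs.smul c)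
    have hf'V : (fun a => eval (p a) f') ∈ V := by
      by_cases h0' : f' = 0
      · rw [h0']; simp only [map_zero]
        exact V.zero_mem
      refine ih _ ?_ f' hf's rfl
      rw [← hl]
      apply lt_of_le_of_ne
      · rw [degree_le_iff]
        intro a ha
        by_contra hlt
        rw [not_le] at hlt
        rw [mem_support_iff] at ha
        apply ha
        rw [hf', coeff_sub, coeff_smul, coeff_eq_zero_of_lt hlt,
          coeff_eq_zero_of_lt (m := lex) (f := P) (by rw [hPd]; exact hlt)]
        simp
      · intro heq
        have heq := lex.toSyn.injective heq
        apply coeff_degree_ne_zero_iff.2 h0'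
        rw [heq, hf', coeff_sub, coeff_smul]
        have h1 : f.coeff (lex.degree f) = lex.leadingCoeff f := rfl
        have h2 : P.coeff (lex.degree f) = lex.leadingCoeff P := by rw [← hPd]; rfl
        rw [h1, h2, hc, smul_eq_mul, div_mul_cancel₀, sub_self]
        exact leadingCoeff_ne_zero_iff.2 hP0
    have : (fun a => eval (p a) f) = (fun a => eval (p a) f') + c • (fun a => eval (p a) P) := by
      ext a
      simp [hf', smul_eval]
    rw [this]
    exact V.add_mem hf'V (V.smul_mem _ hPV)
  exact main _ f hf rfl

/-- Linear independence of the evaluated slim family at unramified points. -/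
theorem slim_linInd {r n : ℕ} (hr : 2 ≤ r) {q : ℂ} (hq : IsPrimitiveRoot q (r - 1))
    (z : Fin n → ℂ) (hz0 : ∀ i, z i ≠ 0)
    (hz : Function.Injective fun i => z i ^ (r - 1))
    (G : (Fin n → Fin (r - 1)) → MvPolynomial (Fin n) ℂ)
    (hG : ∀ d, HighestPartition n (G d) (T (fun i => (d i : ℕ)))) :
    LinearIndependent ℂ (fun d : Fin n → Fin (r - 1) => fun a : Fin n → Fin (r - 1) =>
      eval (fun i => q ^ (a i : ℕ) * z i) (G d)) := by
  classical
  let p : (Fin n → Fin (r - 1)) → Fin n → ℂ := fun a i => q ^ (a i : ℕ) * z i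
  have hp : ∀ a i, p a i ^ (r - 1) = z i ^ (r - 1) := by
    intro a i
    simp only [p]
    rw [mul_pow, ← pow_mul, mul_comm (a i : ℕ), pow_mul, hq.pow_eq_one, one_pow, one_mul]
  apply linearIndependent_of_top_le_span_of_card_eq_finrank
  · intro v _
    have hsep : ∀ a b, b ≠ a → ∃ f : MvPolynomial (Fin n) ℂ, f.IsSymmetric ∧
        eval (p b) f = 0 ∧ eval (p a) f ≠ 0 := by
      intro a b hab
      obtain ⟨j, hj⟩ := Function.ne_iff.1 hab
      refine ⟨∏ i, (X i - C (p b j)), ?_, ?_, ?_⟩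
      · intro e
        simp only [map_prod, map_sub, rename_X, rename_C]
        exact Equiv.prod_comp e (fun i => (X i - C (p b j) : MvPolynomial (Fin n) ℂ))
      · rw [map_prod]
        exact Finset.prod_eq_zero (Finset.mem_univ j) (by simp)
      · rw [map_prod, Finset.prod_ne_zero_iff]
        intro i _ h
        simp only [map_sub, eval_X, eval_C] at h
        rw [sub_eq_zero] at h
        have h1 : z i ^ (r - 1) = z j ^ (r - 1) := by rw [← hp a i, h, hp]
        have h2 : i = j := hz h1
        subst h2
        have h3 : q ^ (a i : ℕ) = q ^ (b i : ℕ) := mul_right_cancel₀ (hz0 i) h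
        exact hj (Fin.ext (hq.pow_inj (a i).2 (b i).2 h3)).symm
    choose F hFs hF0 hF1 using hsep
    let L : (Fin n → Fin (r - 1)) → MvPolynomial (Fin n) ℂ := fun a =>
      ∏ b, if h : b ≠ a then F a b h else 1
    have hLs : ∀ a, (L a).IsSymmetric := by
      intro a
      apply (symmetricSubalgebra (Fin n) ℂ).prod_mem
      intro b _
      split_ifs with h
      · exact hFs a b h
      · exact (symmetricSubalgebra (Fin n) ℂ).one_mem
    have hL0 : ∀ a b, b ≠ a → eval (p b) (L a) = 0 := by
      intro a b h
      rw [map_prod]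
      exact Finset.prod_eq_zero (Finset.mem_univ b) (by rw [dif_pos h, hF0])
    have hL1 : ∀ a, eval (p a) (L a) ≠ 0 := by
      intro a
      rw [map_prod, Finset.prod_ne_zero_iff]
      intro b _
      split_ifs with h
      · exact hF1 a b h
      · simp
    let f : MvPolynomial (Fin n) ℂ := ∑ a, (v a / eval (p a) (L a)) • L a
    have hfs : f.IsSymmetric := (symmetricSubalgebra (Fin n) ℂ).sum_mem
      (fun a _ => (symmetricSubalgebra (Fin n) ℂ).smul_mem (hLs a) _)
    have hv : v = fun a => eval (p a) f := by
      ext a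
      simp only [f, map_sum, smul_eval]
      rw [Finset.sum_eq_single a]
      · rw [div_mul_cancel₀ _ (hL1 a)]
      · intro b _ hb
        rw [hL0 b a hb.symm, mul_zero]
      · simp
    rw [hv]
    exact sym_mem_span hr p _ hp G hG f hfs
  · simp

/-- Permuting the roots of unity in a wheel. -/
theorem wheel_perm {k n N : ℕ} (hn : k < n) (hcop : Nat.Coprime (k + 1) N) {t : ℂ}
    (ht : t ^ (k + 1) = 1) {f : MvPolynomial (Fin n) ℂ} (hf : f.IsSymmetric)
    (x : ℂ) (y : Fin n → ℂ) :
    eval (fun j : Fin n => if (j : ℕ) ≤ k then t ^ (N * (j : ℕ)) * x else y j) f =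
    eval (fun j : Fin n => if (j : ℕ) ≤ k then t ^ (j : ℕ) * x else y j) f := by
  let φ : Fin n → Fin n := fun j => if h : (j : ℕ) ≤ k then
    ⟨(N * (j : ℕ)) % (k + 1), by have := Nat.mod_lt (N * (j : ℕ)) (show 0 < k + 1 by omega); omega⟩ else j
  have hφk : ∀ j : Fin n, (j : ℕ) ≤ k → (φ j : ℕ) = (N * (j : ℕ)) % (k + 1) := by
    intro j h; simp only [φ, dif_pos h]
  have hφn : ∀ j : Fin n, ¬ (j : ℕ) ≤ k → φ j = j := by
    intro j h; simp only [φ, dif_neg h]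
  have hφle : ∀ j : Fin n, (φ j : ℕ) ≤ k ↔ (j : ℕ) ≤ k := by
    intro j
    by_cases h : (j : ℕ) ≤ k
    · have := Nat.mod_lt (N * (j : ℕ)) (show 0 < k + 1 by omega)
      rw [hφk j h]; exact ⟨fun _ => h, fun _ => by omega⟩
    · rw [hφn j h]
  have hinj : Function.Injective φ := by
    intro i j hij
    by_cases h : (i : ℕ) ≤ k
    · have h' : (j : ℕ) ≤ k := by rw [← hφle, ← hij, hφle]; exact h
      have h3 : (N * (i : ℕ)) % (k + 1) = (N * (j : ℕ)) % (k + 1) := by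
        rw [← hφk i h, ← hφk j h', hij]
      have h4 : (i : ℕ) ≡ j [MOD (k + 1)] := Nat.ModEq.cancel_left_of_coprime hcop h3
      exact Fin.ext (Nat.ModEq.eq_of_lt_of_lt h4 (by omega) (by omega))
    · have h' : ¬ (j : ℕ) ≤ k := by rw [← hφle, ← hij, hφle]; exact h
      rwa [hφn i h, hφn j h'] at hij
  let e : Equiv.Perm (Fin n) := Equiv.ofBijective φ (Finite.injective_iff_bijective.1 hinj)
  have he : ∀ j, e j = φ j := fun j => rfl
  conv_rhs => rw [← hf e, eval_rename]
  congr 2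
  ext j
  simp only [Function.comp, he, hφle]
  by_cases h : (j : ℕ) ≤ k
  · rw [if_pos h, if_pos h, hφk j h]
    congr 1
    exact pow_eq_pow_mod _ ht
  · rw [if_neg h, if_neg h, hφn j h]

/-- A polynomial vanishing at the generic points of the wheel plane vanishes on it. -/
theorem wheel_generic {k n : ℕ} {t : ℂ} (ht : IsPrimitiveRoot t (k + 1)) (hn : k < n)
    (f : MvPolynomial (Fin n) ℂ)
    (H : ∀ (x : ℂ) (y : Fin n → ℂ),
      (∀ j : Fin n, (if (j : ℕ) ≤ k then t ^ (j : ℕ) * x else y j) ≠ 0) →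
      (Function.Injective fun j : Fin n => if (j : ℕ) ≤ k then t ^ (j : ℕ) * x else y j) →
      eval (fun j : Fin n => if (j : ℕ) ≤ k then t ^ (j : ℕ) * x else y j) f = 0)
    (x : ℂ) (y : Fin n → ℂ) :
    eval (fun j : Fin n => if (j : ℕ) ≤ k then t ^ (j : ℕ) * x else y j) f = 0 := by
  classical
  let o : Fin n := ⟨0, by omega⟩
  let P : Fin n → MvPolynomial (Fin n) ℂ := fun j =>
    if (j : ℕ) ≤ k then C (t ^ (j : ℕ)) * X o else X j
  have hP : ∀ (u : Fin n → ℂ) j, eval u (P j) =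
      if (j : ℕ) ≤ k then t ^ (j : ℕ) * u o else u j := by
    intro u j
    simp only [P]
    split_ifs <;> simp
  let D : MvPolynomial (Fin n) ℂ := (∏ j, P j) * ∏ i, ∏ j, if i = j then 1 else (P i - P j)
  set Q := aeval P f with hQdef
  have hQ : ∀ u : Fin n → ℂ, eval u Q =
      eval (fun j : Fin n => if (j : ℕ) ≤ k then t ^ (j : ℕ) * u o else u j) f := by
    intro u
    have : (fun j : Fin n => if (j : ℕ) ≤ k then t ^ (j : ℕ) * u o else u j) =
      fun j => eval u (P j) := by ext j; rw [hP]
    rw [this, hQdef]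
    clear hQdef Q
    clear H
    induction f using MvPolynomial.induction_on with
    | C a => simp
    | add p q hp hq => rw [map_add, map_add, map_add, hp, hq]
    | mul_X p i hp => rw [map_mul, map_mul, map_mul, hp, aeval_X, eval_X]
  have hD : ∀ u : Fin n → ℂ, eval u D ≠ 0 ↔
      (∀ j, eval u (P j) ≠ 0) ∧ Function.Injective fun j => eval u (P j) := by
    intro u
    simp only [D, map_mul, map_prod, mul_ne_zero_iff, Finset.prod_ne_zero_iff, Finset.mem_univ,
      true_imp_iff]
    apply and_congr Iff.rfl
    constructor
    · intro h i j hij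
      by_contra hne
      have := h i j
      rw [if_neg hne, map_sub] at this
      exact this (sub_eq_zero.2 hij)
    · intro h i j
      split_ifs with hij
      · simp
      · rw [map_sub, sub_ne_zero]
        exact fun h' => hij (h h')
  have hD0 : D ≠ 0 := by
    intro h0
    let u : Fin n → ℂ := fun j => if (j : ℕ) = 0 then 1 else ((j : ℕ) : ℂ) + 1
    have huo : u o = 1 := by simp [u, o]
    have huj : ∀ j : Fin n, ¬ (j : ℕ) ≤ k → u j = (((j : ℕ) + 1 : ℕ) : ℂ) := by
      intro j hj
      have : (j : ℕ) ≠ 0 := by omega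
      simp [u, this]
    have htn : ‖t‖ = 1 := ht.norm'_eq_one (by omega)
    refine (hD u).2 ⟨?_, ?_⟩ (by rw [h0, map_zero])
    · intro j
      rw [hP, huo]
      split_ifs with h
      · rw [mul_one]; exact pow_ne_zero _ (ht.ne_zero (by omega))
      · rw [huj j h]; exact Nat.cast_ne_zero.2 (by omega)
    · have hno : ∀ i j : Fin n, (i : ℕ) ≤ k → ¬ (j : ℕ) ≤ k → t ^ (i : ℕ) * 1 ≠ u j := by
        intro i j hi hj h
        have h2 := congrArg norm h
        rw [huj j hj, mul_one, norm_pow, htn, one_pow, Complex.norm_natCast] at h2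
        have : 1 = (j : ℕ) + 1 := by exact_mod_cast h2
        omega
      intro i j hij
      simp only [hP, huo] at hij
      by_cases hi : (i : ℕ) ≤ k <;> by_cases hj : (j : ℕ) ≤ k
      · rw [if_pos hi, if_pos hj, mul_one, mul_one] at hij
        exact Fin.ext (ht.pow_inj (by omega) (by omega) hij)
      · rw [if_pos hi, if_neg hj] at hij
        exact absurd hij (hno i j hi hj)
      · rw [if_neg hi, if_pos hj] at hij
        exact absurd hij.symm (hno j i hj hi)
      · rw [if_neg hi, if_neg hj, huj i hi, huj j hj] at hij
        have := Nat.cast_injective hij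
        exact Fin.ext (by omega)
  have hQD : Q * D = 0 := by
    apply MvPolynomial.funext
    intro u
    rw [map_mul, map_zero]
    by_cases h : eval u D = 0
    · rw [h, mul_zero]
    · obtain ⟨h1, h2⟩ := (hD u).1 h
      simp only [hP] at h1 h2
      rw [hQ, H (u o) u h1 h2, zero_mul]
  have hQ0 : Q = 0 := (mul_eq_zero.1 hQD).resolve_right hD0
  have := hQ (fun j => if (j : ℕ) = 0 then x else y j)
  rw [hQ0, map_zero] at this
  rw [this]
  congr 2
  ext j
  by_cases h : (j : ℕ) ≤ k
  · simp [h, o]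
  · have : (j : ℕ) ≠ 0 := by omega
    simp [h, this]

end SepFrob

/-- let `h = Σ_{i=1}^s f_i g_i` with the `g_i` symmetric polynomials whose
highest partitions `μ_i` are `(r-1)`-slim and pairwise distinct, and `f_i = 𝓕(f̃_i)`
Frobenius images of symmetric polynomials `f̃_i`.  Then `h ∈ F_n^{(k,r)}` if and only if
every `f̃_i ∈ F_n^{(k,2)}`. -/
theorem separating_frobenius_coefficients
    (k r n : ℕ) (hk : 0 < k) (hr : 2 ≤ r) (hcop : Nat.Coprime (k + 1) (r - 1))
    (t q : ℂ) (ht : IsPrimitiveRoot t (k + 1)) (hq : IsPrimitiveRoot q (r - 1))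
    (hn : k < n)
    (s : ℕ) (g : Fin s → MvPolynomial (Fin n) ℂ) (μ : Fin s → (Fin n → ℕ))
    (hμ : ∀ i, Antitone (μ i) ∧ IsSlim r n (μ i) ∧ HighestPartition n (g i) (μ i))
    (hdist : Function.Injective μ)
    (ftil : Fin s → MvPolynomial (Fin n) ℂ) (hftil : ∀ i, (ftil i).IsSymmetric) :
    ((∑ i, Frob r n (ftil i) * g i).IsSymmetric ∧
      ∀ (σ : ℕ → ℕ), (∀ i, σ i ≤ r - 2) → ∀ (x : ℂ) (y : Fin n → ℂ),
        MvPolynomial.eval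
          (fun j : Fin n => if (j : ℕ) = 0 then x
            else if (j : ℕ) ≤ k then t ^ (j : ℕ) * q ^ (σ (j : ℕ)) * x else y j)
          (∑ i, Frob r n (ftil i) * g i) = 0)
    ↔ ∀ i : Fin s, ∀ (x : ℂ) (y : Fin n → ℂ),
        MvPolynomial.eval
          (fun j : Fin n => if (j : ℕ) ≤ k then t ^ (j : ℕ) * x else y j)
          (ftil i) = 0 := by

  classical
  have hgs : ∀ i, (g i).IsSymmetric := fun i => SepFrob.isSymmetric_highest (hμ i).2.2
  have hqN := hq.pow_eq_one
  constructor
  · rintro ⟨-, H⟩ i X₀ Y₀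
    rw [← SepFrob.wheel_perm hn hcop ht.pow_eq_one (hftil i)]
    simp only [pow_mul t (r - 1)]
    have ht' : IsPrimitiveRoot (t ^ (r - 1)) (k + 1) := ht.pow_of_coprime _ hcop.symm
    revert X₀ Y₀
    apply SepFrob.wheel_generic ht' hn
    intro X Y hne hinj
    obtain ⟨x, hx⟩ := IsAlgClosed.exists_pow_nat_eq X (n := r - 1) (by omega)
    choose y hy using fun j => IsAlgClosed.exists_pow_nat_eq (Y j) (n := r - 1) (by omega)
    let z : Fin n → ℂ := fun j => if (j : ℕ) ≤ k then t ^ (j : ℕ) * x else y j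
    have hzN : (fun j => z j ^ (r - 1)) =
        fun j : Fin n => if (j : ℕ) ≤ k then (t ^ (r - 1)) ^ (j : ℕ) * X else Y j := by
      ext j
      simp only [z]
      split_ifs
      · rw [mul_pow, hx, ← pow_mul, ← pow_mul, mul_comm (j : ℕ)]
      · exact hy j
    have hz0 : ∀ j, z j ≠ 0 := by
      intro j h
      apply hne j
      rw [← congrFun hzN j]
      simp only [h]
      exact zero_pow (by omega)
    rw [← hzN] at hinj ⊢
    -- the full slim family
    let G : (Fin n → Fin (r - 1)) → MvPolynomial (Fin n) ℂ := fun d =>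
      if h : ∃ i, μ i = SepFrob.T (fun j => (d j : ℕ)) then g h.choose
      else msym n (SepFrob.T (fun j => (d j : ℕ)))
    have hG : ∀ d, HighestPartition n (G d) (SepFrob.T (fun j => (d j : ℕ))) := by
      intro d
      by_cases h : ∃ i, μ i = SepFrob.T (fun j => (d j : ℕ))
      · simp only [G, dif_pos h]
        have := (hμ h.choose).2.2
        rwa [h.choose_spec] at this
      · simp only [G, dif_neg h]
        exact SepFrob.highest_msym (SepFrob.T_antitone _)
    let dd : Fin s → Fin n → Fin (r - 1) := fun i j =>
      ⟨SepFrob.dif (μ i) j, SepFrob.slim_dif (hμ i).2.1 j⟩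
    have hTdd : ∀ i, SepFrob.T (fun j => (dd i j : ℕ)) = μ i := fun i =>
      SepFrob.T_dif (hμ i).1
    have hdd : Function.Injective dd := by
      intro i j hij
      apply hdist
      rw [← hTdd i, hij, hTdd]
    have hGdd : ∀ i, G (dd i) = g i := by
      intro i
      have h : ∃ i', μ i' = SepFrob.T (fun j => (dd i j : ℕ)) := ⟨i, (hTdd i).symm⟩
      simp only [G, dif_pos h]
      exact congrArg g (hdist (h.choose_spec.trans (hTdd i)))
    have hLI := (SepFrob.slim_linInd hr hq z hz0 hinj G hG).comp dd hdd
    rw [Fintype.linearIndependent_iff] at hLI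
    refine hLI (fun i => eval (fun j => z j ^ (r - 1)) (ftil i)) ?_ i
    ext a
    simp only [Finset.sum_apply, Pi.smul_apply, Function.comp, smul_eq_mul, hGdd, Pi.zero_apply]
    -- evaluate the wheel condition
    let o : Fin n := ⟨0, by omega⟩
    let σ : ℕ → ℕ := fun m => if h : m < n then
      ((a ⟨m, h⟩ : ℕ) + ((r - 1) - (a o : ℕ))) % (r - 1) else 0
    have hσ : ∀ m, σ m ≤ r - 2 := by
      intro m
      simp only [σ]
      split_ifs with h
      · have := Nat.mod_lt ((a ⟨m, h⟩ : ℕ) + ((r - 1) - (a o : ℕ))) (show 0 < r - 1 by omega)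
        omega
      · omega
    have hH := H σ hσ (q ^ (a o : ℕ) * x) (fun j => q ^ (a j : ℕ) * y j)
    have hpt : (fun j : Fin n => if (j : ℕ) = 0 then q ^ (a o : ℕ) * x
            else if (j : ℕ) ≤ k then t ^ (j : ℕ) * q ^ (σ (j : ℕ)) * (q ^ (a o : ℕ) * x)
            else q ^ (a j : ℕ) * y j) = fun j => q ^ (a j : ℕ) * z j := by
      ext j
      by_cases h0 : (j : ℕ) = 0
      · have : j = o := Fin.ext h0
        subst this
        simp [z, o]
      · by_cases h : (j : ℕ) ≤ k
        · have hqq : q ^ (σ (j : ℕ)) * q ^ (a o : ℕ) = q ^ (a j : ℕ) := by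
            simp only [σ, dif_pos j.2]
            rw [← pow_eq_pow_mod _ hqN, ← pow_add]
            have : (a j : ℕ) + (r - 1 - (a o : ℕ)) + (a o : ℕ) = a j + (r - 1) := by
              have := (a o).2
              omega
            rw [Fin.eta, this, pow_add, hqN, mul_one]
          simp only [z, if_neg h0, if_pos h]
          rw [← hqq]; ring
        · simp only [z, if_neg h0, if_neg h]
    rw [hpt, map_sum] at hH
    rw [← hH]
    apply Finset.sum_congr rfl
    intro i' _
    rw [map_mul, SepFrob.eval_Frob]
    congr 3
    ext j
    rw [mul_pow, ← pow_mul, mul_comm (a j : ℕ), pow_mul, hqN, one_pow, one_mul]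
  · intro H
    refine ⟨?_, ?_⟩
    · exact (symmetricSubalgebra (Fin n) ℂ).sum_mem fun i _ =>
        (SepFrob.isSymmetric_Frob r n (hftil i)).mul (hgs i)
    · intro σ hσ x y
      rw [map_sum]
      apply Finset.sum_eq_zero
      intro i _
      rw [map_mul, SepFrob.eval_Frob]
      have := H i (x ^ (r - 1)) (fun j => y j ^ (r - 1))
      rw [← SepFrob.wheel_perm hn hcop ht.pow_eq_one (hftil i)] at this
      rw [mul_eq_zero]
      left
      rw [← this]
      congr 2
      ext j
      by_cases h0 : (j : ℕ) = 0
      · simp [h0]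
      · by_cases h : (j : ℕ) ≤ k
        · rw [if_neg h0, if_pos h, if_pos h, mul_pow, mul_pow, ← pow_mul, ← pow_mul,
            mul_comm (σ _), pow_mul q, hqN, one_pow, mul_one, mul_comm (j : ℕ)]
        · rw [if_neg h0, if_neg h, if_neg h]
end

section
/- For every n > k and every m ≥ 0, the dimension of the space of polynomials in F_n^{(k,r)} homogeneous of degree m equals the number of pairs (λ, μ) where λ ∈ π_n is an admissible partition, μ ∈ π_n is an (r−1)-slim partition, and (r−1)|λ| + |μ| = m. Equivalently, as formal power series in v, Σ_m dim(F_{n,m}^{(k,r)}) v^m = b_n^{(k)}(v^{r−1}) · ∏_{s=1}^n (1 − v^{s(r−1)})/(1 − v^s), where b_n^{(k)}(v) = Σ_m #{admissible λ ∈ π_n with |λ| = m} v^m. -/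
open MvPolynomial

namespace HL

/-- exponent vector as a finitely supported function -/
noncomputable def fs {n : ℕ} (l : Fin n → ℕ) : Fin n →₀ ℕ := Finsupp.equivFunOnFinite.symm l

@[simp] lemma fs_apply {n : ℕ} (l : Fin n → ℕ) (i : Fin n) : fs l i = l i := rfl

lemma fs_inj {n : ℕ} {l l' : Fin n → ℕ} (h : fs l = fs l') : l = l' := by
  funext i; exact DFunLike.congr_fun h i

lemma fs_coe {n : ℕ} (d : Fin n →₀ ℕ) : fs (fun i => d i) = d := by
  ext i; rfl

/-- leading exponent -/
def Lead {n : ℕ} (f : MvPolynomial (Fin n) ℂ) (l : Fin n → ℕ) : Prop :=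
  f ≠ 0 ∧ MonomialOrder.lex.degree f = fs l

lemma Lead.mul {n : ℕ} {f g : MvPolynomial (Fin n) ℂ} {a b : Fin n → ℕ}
    (hf : Lead f a) (hg : Lead g b) : Lead (f * g) (fun i => a i + b i) := by
  refine ⟨mul_ne_zero hf.1 hg.1, ?_⟩
  rw [MonomialOrder.degree_mul hf.1 hg.1, hf.2, hg.2]
  ext i; simp

lemma Lead.coeff_ne {n : ℕ} {f : MvPolynomial (Fin n) ℂ} {a : Fin n → ℕ}
    (hf : Lead f a) : coeff (fs a) f ≠ 0 := by
  rw [← hf.2]; exact MonomialOrder.coeff_degree_ne_zero_iff.2 hf.1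

lemma Lead.le {n : ℕ} {f : MvPolynomial (Fin n) ℂ} {a : Fin n → ℕ}
    (hf : Lead f a) {d : Fin n →₀ ℕ} (hd : coeff d f ≠ 0) : toLex d ≤ toLex (fs a) := by
  rw [← hf.2]
  exact MonomialOrder.le_degree (m := MonomialOrder.lex) (mem_support_iff.2 hd)

lemma lead_of {n : ℕ} {f : MvPolynomial (Fin n) ℂ} {a : Fin n → ℕ}
    (h1 : coeff (fs a) f ≠ 0) (h2 : ∀ d, coeff d f ≠ 0 → toLex d ≤ toLex (fs a)) : Lead f a := by
  have h0 : f ≠ 0 := by rintro rfl; simp at h1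
  refine ⟨h0, ?_⟩
  have := h2 _ (MonomialOrder.coeff_degree_ne_zero_iff (m := MonomialOrder.lex).2 h0)
  have h3 := MonomialOrder.le_degree (m := MonomialOrder.lex) (mem_support_iff.2 h1)
  exact toLex.injective (le_antisymm this h3)

lemma Lead.expand {n : ℕ} {f : MvPolynomial (Fin n) ℂ} {a : Fin n → ℕ}
    (hf : Lead f a) {R : ℕ} (hR : R ≠ 0) : Lead (expand R f) (fun i => R * a i) := by
  classical
  have e : fs (fun i => R * a i) = R • fs a := by ext i; simp
  apply lead_of
  · rw [e, coeff_expand_smul _ hR]; exact hf.coeff_ne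
  · intro d hd
    have := support_expand_subset f (mem_support_iff.2 hd)
    obtain ⟨d', hd', rfl⟩ := Finset.mem_image.1 this
    rw [e]
    have h := hf.le (mem_support_iff.1 hd')
    have : ∀ m : ℕ, toLex (m • d') ≤ toLex (m • fs a) := by
      intro m
      induction m with
      | zero => simp
      | succ m ih => rw [succ_nsmul, succ_nsmul, toLex_add, toLex_add]; exact add_le_add ih h
    exact this R

lemma perm_le {n : ℕ} {l : Fin n → ℕ} (hl : Antitone l) (w : Equiv.Perm (Fin n)) :
    toLex (fs (l ∘ w)) ≤ toLex (fs l) := by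
  by_contra hc
  push Not at hc
  obtain ⟨i, hi, hi2⟩ := hc
  simp at hi hi2
  have hc : (Finset.univ.filter fun j => l (w i) ≤ l j).card
      = (Finset.univ.filter fun j => l (w i) ≤ l (w j)).card := by
    symm
    apply Finset.card_bij (fun j _ => w j)
    · simp
    · simp
    · intro b hb
      exact ⟨w.symm b, by simpa using hb, by simp⟩
  have hlt : (Finset.univ.filter fun j => l (w i) ≤ l j).card
      < (Finset.univ.filter fun j => l (w i) ≤ l (w j)).card := by
    apply Finset.card_lt_card
    rw [Finset.ssubset_iff_of_subset]
    · refine ⟨i, by simp, by simpa using hi2⟩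
    · intro j hj
      simp only [Finset.mem_filter, Finset.mem_univ, true_and] at hj ⊢
      have : j < i := by
        by_contra h
        have := hl (not_lt.1 h)
        omega
      have := hi j this
      omega
  omega

lemma rename_monomial' {n : ℕ} (w : Equiv.Perm (Fin n)) (l : Fin n → ℕ) (c : ℂ) :
    rename w (monomial (fs l) c) = monomial (fs (l ∘ w.symm)) c := by
  rw [rename_monomial]
  congr 2
  ext i
  obtain ⟨j, rfl⟩ := w.surjective i
  rw [Finsupp.mapDomain_apply w.injective]
  simp

/-- symmetrised monomial -/
noncomputable def M {n : ℕ} (l : Fin n → ℕ) : MvPolynomial (Fin n) ℂ :=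
  ∑ w : Equiv.Perm (Fin n), rename w (monomial (fs l) 1)

lemma M_symm {n : ℕ} (l : Fin n → ℕ) : (M l).IsSymmetric := by
  intro e
  unfold M
  rw [map_sum]
  apply Fintype.sum_equiv (Equiv.mulLeft e)
  intro w
  rw [rename_rename]; rfl

lemma M_coeff {n : ℕ} (l : Fin n → ℕ) (d : Fin n →₀ ℕ) (h : coeff d (M l) ≠ 0) :
    ∃ w : Equiv.Perm (Fin n), d = fs (l ∘ w) := by
  classical
  unfold M at h
  rw [coeff_sum] at h
  obtain ⟨w, -, hw⟩ := Finset.exists_ne_zero_of_sum_ne_zero h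
  rw [rename_monomial', coeff_monomial] at hw
  exact ⟨w.symm, by by_contra h'; rw [if_neg (fun h => h' h.symm)] at hw; exact hw rfl⟩

lemma M_hom {n : ℕ} (l : Fin n → ℕ) : (M l).IsHomogeneous (∑ i, l i) := by
  apply IsHomogeneous.sum
  intro w _
  rw [rename_monomial']
  apply isHomogeneous_monomial
  rw [Finsupp.degree_eq_sum]
  simp
  exact Equiv.sum_comp w.symm l

lemma M_lead {n : ℕ} {l : Fin n → ℕ} (hl : Antitone l) : Lead (M l) l := by
  classical
  apply lead_of
  · unfold M
    rw [coeff_sum]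
    simp_rw [rename_monomial', coeff_monomial]
    rw [Finset.sum_boole]
    simp only [ne_eq, Nat.cast_eq_zero, Finset.card_eq_zero]
    intro h
    have : (1 : Equiv.Perm (Fin n)) ∈ (∅ : Finset (Equiv.Perm (Fin n))) := by
      rw [← h]; simp; rfl
    simp at this
  · intro d hd
    obtain ⟨w, rfl⟩ := M_coeff l d hd
    exact perm_le hl w

/-- admissibility -/
def Adm {n : ℕ} (k : ℕ) (l : Fin n → ℕ) : Prop :=
  ∀ i : ℕ, (Finset.univ.filter fun a : Fin n => l a = i).card ≤ k

lemma Adm.comp {n k : ℕ} {l : Fin n → ℕ} (h : Adm k l) (w : Equiv.Perm (Fin n)) :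
    Adm k (l ∘ w) := by
  intro i
  refine le_trans (le_of_eq ?_) (h i)
  apply Finset.card_bij (fun j _ => w j)
  · simp
  · simp
  · intro b hb
    exact ⟨w.symm b, by simpa using hb, by simp⟩

lemma M_coeff_adm {n k : ℕ} {l : Fin n → ℕ} (h : ¬ Adm k l) (b : Fin n → ℕ) (hb : Adm k b) :
    coeff (fs b) (M l) = 0 := by
  by_contra hc
  obtain ⟨w, hw⟩ := M_coeff l _ hc
  apply h
  have := fs_inj hw
  have h2 : l = b ∘ w.symm := by rw [this]; funext i; simp
  rw [h2]; exact hb.comp _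

/-- points of the wheel -/
def Wheel {n : ℕ} (k : ℕ) (τ : ℂ) (z : Fin n → ℂ) : Prop :=
  ∀ i j : Fin n, (i : ℕ) = 0 → (j : ℕ) ≤ k → z j = τ ^ (j : ℕ) * z i

/-- vanishing on the wheel -/
def W {n : ℕ} (k : ℕ) (τ : ℂ) (g : MvPolynomial (Fin n) ℂ) : Prop :=
  ∀ z : Fin n → ℂ, Wheel k τ z → eval z g = 0

/-- collapse of indices -/
def phi {n : ℕ} (k : ℕ) (hn : k < n) (j : Fin n) : Fin n := if (j : ℕ) ≤ k then ⟨0, by omega⟩ else j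

/-- coefficients of the parametrisation -/
noncomputable def cc {n : ℕ} (k : ℕ) (τ : ℂ) (j : Fin n) : ℂ := if (j : ℕ) ≤ k then τ ^ (j : ℕ) else 1

/-- the substitution -/
noncomputable def par {n : ℕ} (k : ℕ) (hn : k < n) (τ : ℂ) :
    MvPolynomial (Fin n) ℂ →ₐ[ℂ] MvPolynomial (Fin n) ℂ :=
  aeval (fun j => C (cc k τ j) * X (phi k hn j))

lemma eval_par {n k : ℕ} (hn : k < n) (τ : ℂ) (y : Fin n → ℂ) (g : MvPolynomial (Fin n) ℂ) :
    eval y (par k hn τ g) = eval (fun j => cc k τ j * y (phi k hn j)) g := by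
  unfold par
  rw [aeval_def, ← eval₂_id, ← eval₂_id]
  simp [eval₂_comp_left]
  induction g using MvPolynomial.induction_on with
  | C a => simp
  | add p q hp hq => simp [hp, hq]
  | mul_X p i hp => simp [hp]

lemma wheel_par {n k : ℕ} (hn : k < n) (τ : ℂ) (y : Fin n → ℂ) :
    Wheel k τ (fun j => cc k τ j * y (phi k hn j)) := by
  intro i j hi hj
  have : phi k hn i = phi k hn j := by simp [phi, hj, hi]
  simp [cc, hi, hj, this]

lemma wheel_eq {n k : ℕ} (hn : k < n) {τ : ℂ} {z : Fin n → ℂ} (hz : Wheel k τ z) :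
    (fun j => cc k τ j * z (phi k hn j)) = z := by
  funext j
  by_cases h : (j : ℕ) ≤ k
  · simp [cc, phi, h]; rw [hz ⟨0, by omega⟩ j rfl h]
  · simp [cc, phi, h]

lemma W_iff {n k : ℕ} (hn : k < n) (τ : ℂ) (g : MvPolynomial (Fin n) ℂ) :
    W k τ g ↔ par k hn τ g = 0 := by
  constructor
  · intro h
    apply MvPolynomial.funext
    intro y
    rw [eval_par, map_zero]
    exact h _ (wheel_par hn τ y)
  · intro h z hz
    rw [← wheel_eq hn hz, ← eval_par, h, map_zero]

lemma exists_generic {n k : ℕ} (hk : 0 < k) (τ : ℂ) (hτ : IsPrimitiveRoot τ (k + 1)) :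
    ∃ z : Fin n → ℂ, Wheel k τ z ∧ Function.Injective z ∧ ∀ j, z j ≠ 0 := by
  have h1 : ‖τ‖ = 1 := hτ.norm'_eq_one (by omega)
  refine ⟨fun j => if (j : ℕ) ≤ k then τ ^ (j : ℕ) else (j : ℕ), ?_, ?_, ?_⟩
  · intro i j hi hj
    simp [hi, hj]
  · have key : ∀ i j : Fin n, (i : ℕ) ≤ k → ¬ (j : ℕ) ≤ k → τ ^ (i : ℕ) ≠ ((j : ℕ) : ℂ) := by
      intro i j hi hj h
      have := congrArg norm h
      simp [h1] at this
      have h2 : (j : ℕ) = 1 := by exact_mod_cast this.symm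
      omega
    intro i j h
    simp only at h
    split_ifs at h with h1 h2 h2
    · exact Fin.ext (hτ.pow_inj (by omega) (by omega) h)
    · exact absurd h (key i j h1 h2)
    · exact absurd h.symm (key j i h2 h1)
    · exact Fin.ext (by exact_mod_cast h)
  · intro j
    simp only
    split_ifs with h
    · exact pow_ne_zero _ (hτ.ne_zero (by omega))
    · have : (j : ℕ) ≠ 0 := by omega
      exact_mod_cast this

/-- Vandermonde -/
noncomputable def V (n : ℕ) : MvPolynomial (Fin n) ℂ := ∏ i, ∏ j ∈ Finset.Ioi i, (X i - X j)

lemma V_eval_ne {n : ℕ} {z : Fin n → ℂ} (hz : Function.Injective z) : eval z (V n) ≠ 0 := by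
  unfold V
  simp only [map_prod, map_sub, eval_X]
  rw [Finset.prod_ne_zero_iff]
  intro i _
  rw [Finset.prod_ne_zero_iff]
  intro j hj h
  have := hz (sub_eq_zero.1 h)
  simp at hj; omega

lemma V_eval_inj {n : ℕ} {z : Fin n → ℂ} (h : eval z (V n) ≠ 0) : Function.Injective z := by
  unfold V at h
  simp only [map_prod, map_sub, eval_X] at h
  have key : ∀ i j, i < j → z i ≠ z j := by
    intro i j hij he
    rw [Finset.prod_ne_zero_iff] at h
    have := h i (Finset.mem_univ _)
    rw [Finset.prod_ne_zero_iff] at this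
    exact this j (by simpa using hij) (by rw [he, sub_self])
  intro i j hij
  rcases lt_trichotomy i j with h | h | h
  · exact absurd hij (key _ _ h)
  · exact h
  · exact absurd hij.symm (key _ _ h)

lemma dens {n k : ℕ} (hk : 0 < k) (hn : k < n) {τ : ℂ} (hτ : IsPrimitiveRoot τ (k + 1))
    (g : MvPolynomial (Fin n) ℂ)
    (h : ∀ z : Fin n → ℂ, Wheel k τ z → Function.Injective z → (∀ j, z j ≠ 0) → eval z g = 0) :
    W k τ g := by
  set D : MvPolynomial (Fin n) ℂ := V n * ∏ j, X j with hD
  have h0 : W k τ (D * g) := by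
    intro z hz
    rw [map_mul]
    by_cases hd : eval z D = 0
    · rw [hd, zero_mul]
    · rw [hD, map_mul, map_prod] at hd
      have h1 := left_ne_zero_of_mul hd
      have h2 := right_ne_zero_of_mul hd
      rw [Finset.prod_ne_zero_iff] at h2
      rw [h z hz (V_eval_inj h1) (fun j => by simpa using h2 j (Finset.mem_univ _)), mul_zero]
  rw [W_iff hn, map_mul, mul_eq_zero] at h0
  rw [W_iff hn]
  refine h0.resolve_left ?_
  intro hc
  rw [← W_iff hn] at hc
  obtain ⟨z, hz, hz1, hz2⟩ := exists_generic (n := n) hk τ hτ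
  have := hc z hz
  rw [hD, map_mul, map_prod] at this
  refine mul_ne_zero (V_eval_ne hz1) ?_ this
  rw [Finset.prod_ne_zero_iff]
  intro j _; simpa using hz2 j

end HL


namespace HL

/-- identify variable `j` with variable `i` -/
noncomputable def ps {n : ℕ} (i j : Fin n) : MvPolynomial (Fin n) ℂ →ₐ[ℂ] MvPolynomial (Fin n) ℂ :=
  rename (fun a => if a = j then i else a)

lemma sub_dvd_iff {n : ℕ} (i j : Fin n) (p : MvPolynomial (Fin n) ℂ) :
    (X i - X j) ∣ p ↔ ps i j p = 0 := by
  constructor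
  · rintro ⟨s, rfl⟩
    rw [map_mul]
    simp [ps]
  · intro h
    have key : ∀ p : MvPolynomial (Fin n) ℂ, (X i - X j) ∣ p - ps i j p := by
      intro p
      induction p using MvPolynomial.induction_on with
      | C a => simp [ps]
      | add p q hp hq =>
        rw [map_add, add_sub_add_comm]
        exact dvd_add hp hq
      | mul_X p a hp =>
        have : p * X a - ps i j (p * X a) = (p - ps i j p) * X a + ps i j p * (X a - ps i j (X a)) := by
          rw [map_mul]; ring
        rw [this]
        apply dvd_add (Dvd.dvd.mul_right hp _)
        apply Dvd.dvd.mul_left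
        by_cases ha : a = j
        · subst ha
          simp only [ps, rename_X, if_true]
          exact ⟨-1, by ring⟩
        · simp [ps, ha]
    have := key p
    rwa [h, sub_zero] at this

lemma sub_prime {n : ℕ} {i j : Fin n} (h : i ≠ j) : Prime (X i - X j : MvPolynomial (Fin n) ℂ) := by
  refine ⟨?_, ?_, ?_⟩
  · rw [sub_ne_zero]; exact fun hh => h (X_injective hh)
  · intro hu
    have := (sub_dvd_iff i j (1 : MvPolynomial (Fin n) ℂ)).1 hu.dvd
    simp at this
  · intro a b hab
    rw [sub_dvd_iff, map_mul, mul_eq_zero] at hab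
    rwa [sub_dvd_iff, sub_dvd_iff]

lemma V_dvd {n : ℕ} (A : MvPolynomial (Fin n) ℂ)
    (hA : ∀ w : Equiv.Perm (Fin n), rename w A = (w.sign : ℤ) • A) : V n ∣ A := by
  unfold V
  rw [Finset.prod_sigma']
  apply Finset.prod_dvd_of_isRelPrime
  · rintro ⟨i, j⟩ h1 ⟨a, b⟩ h2 hne
    simp at h1 h2
    show IsRelPrime (X i - X j : MvPolynomial (Fin n) ℂ) (X a - X b)
    rw [(sub_prime h1.ne).irreducible.isRelPrime_iff_not_dvd, sub_dvd_iff]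
    simp only [ps, map_sub, rename_X]
    rw [sub_eq_zero]
    intro h
    have := X_injective h
    apply hne
    by_cases haj : a = j
    · by_cases hbj : b = j
      · omega
      · simp [haj, hbj] at this; omega
    · by_cases hbj : b = j
      · simp [haj, hbj] at this; subst this; subst hbj; rfl
      · simp [haj, hbj] at this; omega
  · rintro ⟨i, j⟩ h1
    simp at h1
    show (X i - X j) ∣ A
    rw [sub_dvd_iff]
    have := congrArg (ps i j) (hA (Equiv.swap i j))
    rw [Equiv.Perm.sign_swap h1.ne] at this
    have h2 : ps i j (rename (Equiv.swap i j) A) = ps i j A := by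
      unfold ps
      rw [rename_rename]
      congr 2
      funext a
      simp only [Function.comp]
      rcases eq_or_ne a i with rfl | hai
      · simp
      · rcases eq_or_ne a j with rfl | haj
        · simp
        · rw [Equiv.swap_apply_of_ne_of_ne hai haj]
    rw [h2] at this
    simp at this
    exact self_eq_neg.1 this

lemma rename_V {n : ℕ} (w : Equiv.Perm (Fin n)) : rename w (V n) = (w.sign : ℤ) • V n := by
  unfold V
  simp only [map_prod, map_sub, rename_X]
  have := Equiv.Perm.prod_Ioi_comp_eq_sign_mul_prod w
    (f := fun i j => (X i - X j : MvPolynomial (Fin n) ℂ)) (by intro i j; ring)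
  rw [this]
  simp

/-- coefficient in numerators -/
noncomputable def cf {n : ℕ} (τ : ℂ) (l : Fin n → ℕ) (i j : Fin n) : ℂ := if l i = l j then 1 else τ

/-- the numerator -/
noncomputable def B {n : ℕ} (τ : ℂ) (l : Fin n → ℕ) : MvPolynomial (Fin n) ℂ :=
  monomial (fs l) 1 * ∏ i, ∏ j ∈ Finset.Ioi i, (X i - C (cf τ l i j) * X j)

/-- the antisymmetrised numerator -/
noncomputable def A {n : ℕ} (τ : ℂ) (l : Fin n → ℕ) : MvPolynomial (Fin n) ℂ :=
  ∑ w : Equiv.Perm (Fin n), (w.sign : ℤ) • rename w (B τ l)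

lemma A_anti {n : ℕ} (τ : ℂ) (l : Fin n → ℕ) (w : Equiv.Perm (Fin n)) :
    rename w (A τ l) = (w.sign : ℤ) • A τ l := by
  unfold A
  rw [map_sum, Finset.smul_sum]
  apply Fintype.sum_equiv (Equiv.mulLeft w)
  intro v
  rw [map_zsmul, rename_rename, Equiv.coe_mulLeft, Equiv.Perm.sign_mul, smul_smul]
  congr 1
  push_cast
  rw [← mul_assoc, ← Units.val_mul, Int.units_mul_self]; simp

lemma A_wheel {n k : ℕ} (hn : k < n) {τ : ℂ} (hτ : IsPrimitiveRoot τ (k + 1)) {l : Fin n → ℕ}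
    (hl : Antitone l) (ha : Adm k l) : W k τ (A τ l) := by
  intro z hz
  unfold A
  rw [map_sum]
  apply Finset.sum_eq_zero
  intro w _
  rw [map_zsmul]
  have : eval z (rename w (B τ l)) = 0 := by
    rw [eval_rename]
    unfold B
    rw [map_mul]
    simp only [map_prod, map_sub, map_mul, eval_X, eval_C, Function.comp]
    by_contra hc
    have hc := right_ne_zero_of_mul hc
    rw [Finset.prod_ne_zero_iff] at hc
    have key : ∀ i j, l j < l i → z (w i) ≠ τ * z (w j) := by
      intro i j hij h
      have h1 := hc i (Finset.mem_univ _)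
      rw [Finset.prod_ne_zero_iff] at h1
      have hlt : i < j := by
        by_contra h; have := hl (not_lt.1 h); omega
      apply h1 j (by simpa using hlt)
      rw [cf, if_neg (by omega), h, sub_self]
    let p : ℕ → Fin n := fun a => if h : a < n then ⟨a, h⟩ else ⟨0, by omega⟩
    have hp : ∀ a, a ≤ k → (p a : ℕ) = a := by
      intro a ha; simp [p, show a < n by omega]
    have hzp : ∀ a, a ≤ k → z (p a) = τ ^ a * z (p 0) := by
      intro a ha
      have := hz (p 0) (p a) (hp 0 (by omega)) (by rw [hp a ha]; exact ha)
      rwa [hp a ha] at this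
    have hdec : ∀ a, a < k → l (w.symm (p (a+1))) ≤ l (w.symm (p a)) := by
      intro a hak
      by_contra h
      push Not at h
      apply key _ _ h
      simp only [Equiv.apply_symm_apply]
      rw [hzp (a+1) (by omega), hzp a (by omega)]; ring
    have hlast : l (w.symm (p 0)) ≤ l (w.symm (p k)) := by
      by_contra h
      push Not at h
      apply key _ _ h
      simp only [Equiv.apply_symm_apply]
      rw [hzp k le_rfl, ← mul_assoc, ← pow_succ', hτ.pow_eq_one, one_mul]
    have h1 : ∀ a, a ≤ k → l (w.symm (p a)) ≤ l (w.symm (p 0)) := by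
      intro a
      induction a with
      | zero => intro _; exact le_rfl
      | succ a ih => intro h; exact (hdec a (by omega)).trans (ih (by omega))
    have h2 : ∀ b, b ≤ k → l (w.symm (p k)) ≤ l (w.symm (p (k - b))) := by
      intro b
      induction b with
      | zero => intro _; exact le_rfl
      | succ b ih =>
        intro h
        refine (ih (by omega)).trans ?_
        have := hdec (k - (b+1)) (by omega)
        rwa [show k - (b+1) + 1 = k - b by omega] at this
    have h3 : ∀ a, a ≤ k → l (w.symm (p a)) = l (w.symm (p 0)) := by
      intro a hak
      have := h2 (k - a) (by omega)
      rw [show k - (k - a) = a by omega] at this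
      exact le_antisymm (h1 a hak) (hlast.trans this)
    have h4 := ha (l (w.symm (p 0)))
    have h5 : (Finset.range (k+1)).card ≤
        (Finset.univ.filter fun a : Fin n => l a = l (w.symm (p 0))).card := by
      apply Finset.card_le_card_of_injOn (fun a => w.symm (p a))
      · intro a ha
        simp at ha ⊢
        exact h3 a (by omega)
      · intro a ha b hb h
        simp at ha hb h
        rw [← hp a (by omega), ← hp b (by omega), h]
    rw [Finset.card_range] at h5
    omega
  rw [this, smul_zero]

lemma fac_lead {n : ℕ} {a b : Fin n} (hab : a ≠ b) {c : ℂ} (hc : c ≠ 0) :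
    (X a - C c * X b : MvPolynomial (Fin n) ℂ) ≠ 0 ∧
    MonomialOrder.lex.degree (X a - C c * X b : MvPolynomial (Fin n) ℂ) = Finsupp.single (min a b) 1 ∧
    MonomialOrder.lex.leadingCoeff (X a - C c * X b : MvPolynomial (Fin n) ℂ) =
      if a < b then 1 else -c := by
  classical
  have hco : ∀ d, coeff d (X a - C c * X b : MvPolynomial (Fin n) ℂ) =
      (if Finsupp.single a 1 = d then 1 else 0) - c * (if Finsupp.single b 1 = d then 1 else 0) := by
    intro d; rw [coeff_sub, coeff_C_mul, coeff_X, coeff_X]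
  have hsing : ∀ a b : Fin n, a < b →
      toLex (Finsupp.single b 1 : Fin n →₀ ℕ) ≤ toLex (Finsupp.single a 1) := by
    intro a b h
    apply le_of_lt
    refine ⟨a, ?_, ?_⟩
    · intro d hd
      have hd2 := lt_trans hd h
      simp [Finsupp.single_apply, hd.ne', hd2.ne']
    · simp [Finsupp.single_apply, h.ne']
  have hinj : ∀ a b : Fin n, (Finsupp.single a 1 : Fin n →₀ ℕ) = Finsupp.single b 1 ↔ a = b := by
    intro a b
    exact ⟨fun h => Finsupp.single_left_injective one_ne_zero h, fun h => by rw [h]⟩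
  have hl : Lead (X a - C c * X b : MvPolynomial (Fin n) ℂ) (fun i => Finsupp.single (min a b) 1 i) := by
    apply lead_of
    · rw [fs_coe, hco]
      simp only [hinj]
      rcases lt_or_gt_of_ne hab with h | h
      · rw [min_eq_left h.le]; simp [hab.symm]
      · rw [min_eq_right h.le]; simp [hab, hc]
    · intro d hd
      rw [hco] at hd
      rw [fs_coe]
      have hd' : d = Finsupp.single a 1 ∨ d = Finsupp.single b 1 := by
        by_contra h
        push Not at h
        rw [if_neg h.1.symm, if_neg h.2.symm] at hd
        simp at hd
      rcases lt_or_gt_of_ne hab with h | h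
      · rw [min_eq_left h.le]
        rcases hd' with rfl | rfl
        · exact le_rfl
        · exact hsing _ _ h
      · rw [min_eq_right h.le]
        rcases hd' with rfl | rfl
        · exact hsing _ _ h
        · exact le_rfl
  have h2 := hl.2
  rw [fs_coe] at h2
  refine ⟨hl.1, h2, ?_⟩
  rw [MonomialOrder.leadingCoeff, h2, hco]
  simp only [hinj]
  rcases lt_or_gt_of_ne hab with h | h
  · rw [min_eq_left h.le]; simp [hab.symm, h]
  · rw [min_eq_right h.le]; simp [hab, h.not_gt]

lemma lc_prod {n : ℕ} {ι : Type*} (s : Finset ι) (f : ι → MvPolynomial (Fin n) ℂ) :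
    MonomialOrder.lex.leadingCoeff (∏ i ∈ s, f i) = ∏ i ∈ s, MonomialOrder.lex.leadingCoeff (f i) := by
  classical
  induction s using Finset.induction_on with
  | empty => simp
  | insert a s ha ih => rw [Finset.prod_insert ha, Finset.prod_insert ha,
      MonomialOrder.leadingCoeff_mul, ih]

/-- a product of linear factors -/
noncomputable def PP {n : ℕ} (c : Fin n → Fin n → ℂ) : MvPolynomial (Fin n) ℂ :=
  ∏ i, ∏ j ∈ Finset.Ioi i, (X i - C (c i j) * X j)

lemma PP_one (n : ℕ) : PP (fun _ _ => 1) = V n := by simp [PP, V]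

lemma PP_ne {n : ℕ} (c : Fin n → Fin n → ℂ) (hc : ∀ i j, c i j ≠ 0) (w : Equiv.Perm (Fin n)) :
    rename w (PP c) ≠ 0 := by
  unfold PP
  simp only [map_prod, map_sub, map_mul, rename_X, rename_C]
  rw [Finset.prod_ne_zero_iff]; intro i _
  rw [Finset.prod_ne_zero_iff]; intro j hj
  simp at hj
  exact (fac_lead (w.injective.ne hj.ne) (hc i j)).1

lemma PP_deg {n : ℕ} (c : Fin n → Fin n → ℂ) (hc : ∀ i j, c i j ≠ 0) (w : Equiv.Perm (Fin n)) :
    MonomialOrder.lex.degree (rename w (PP c)) =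
      ∑ i, ∑ j ∈ Finset.Ioi i, Finsupp.single (min (w i) (w j)) 1 := by
  have h := PP_ne c hc w
  unfold PP at h ⊢
  simp only [map_prod, map_sub, map_mul, rename_X, rename_C] at h ⊢
  rw [Finset.prod_ne_zero_iff] at h
  rw [MonomialOrder.degree_prod h]
  apply Finset.sum_congr rfl
  intro i hi
  have h1 := h i hi
  rw [Finset.prod_ne_zero_iff] at h1
  rw [MonomialOrder.degree_prod h1]
  apply Finset.sum_congr rfl
  intro j hj
  simp at hj
  exact (fac_lead (w.injective.ne hj.ne) (hc i j)).2.1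

lemma PP_deg' {n : ℕ} (c : Fin n → Fin n → ℂ) (hc : ∀ i j, c i j ≠ 0) (w : Equiv.Perm (Fin n)) :
    MonomialOrder.lex.degree (rename w (PP c)) = MonomialOrder.lex.degree (V n) := by
  rw [PP_deg c hc w, ← PP_deg (fun _ _ => 1) (by simp) w, PP_one, rename_V]
  rcases Int.units_eq_one_or w.sign with h | h <;> simp [h]

lemma V_lc (n : ℕ) : MonomialOrder.lex.leadingCoeff (V n) = 1 := by
  rw [← PP_one]
  unfold PP
  rw [lc_prod]
  apply Finset.prod_eq_one; intro i _
  rw [lc_prod]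
  apply Finset.prod_eq_one; intro j hj
  simp only [Finset.mem_Ioi] at hj
  rw [(fac_lead hj.ne one_ne_zero).2.2, if_pos hj]

lemma PP_lc {n : ℕ} (c : Fin n → Fin n → ℂ) (hc : ∀ i j, c i j ≠ 0) (w : Equiv.Perm (Fin n))
    (hw : ∀ i j, i < j → w j < w i → c i j = 1) :
    MonomialOrder.lex.leadingCoeff (rename w (PP c)) = (w.sign : ℤ) := by
  have : MonomialOrder.lex.leadingCoeff (rename w (PP c)) =
      MonomialOrder.lex.leadingCoeff (rename w (PP (fun _ _ : Fin n => 1))) := by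
    unfold PP
    simp only [map_prod, map_sub, map_mul, rename_X, rename_C]
    simp only [lc_prod]
    apply Finset.prod_congr rfl; intro i _
    apply Finset.prod_congr rfl; intro j hj
    simp only [Finset.mem_Ioi] at hj
    have hne := w.injective.ne hj.ne
    rw [(fac_lead hne (hc i j)).2.2, (fac_lead hne one_ne_zero).2.2]
    split_ifs with h
    · rfl
    · rw [hw i j hj (lt_of_le_of_ne (not_lt.1 h) hne.symm)]
  rw [this, PP_one, rename_V]
  rcases Int.units_eq_one_or w.sign with h | h <;> simp [h, V_lc]

lemma V_ne (n : ℕ) : V n ≠ 0 := by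
  have := PP_ne (n := n) (fun _ _ => 1) (by simp) 1
  rw [PP_one] at this
  intro h; rw [h] at this; simp at this

lemma B_eq {n : ℕ} (τ : ℂ) (l : Fin n → ℕ) : B τ l = monomial (fs l) 1 * PP (cf τ l) := rfl

lemma B_deg {n : ℕ} {τ : ℂ} (hτ : τ ≠ 0) (l : Fin n → ℕ) (w : Equiv.Perm (Fin n)) :
    MonomialOrder.lex.degree (rename w (B τ l)) =
      fs (l ∘ w.symm) + MonomialOrder.lex.degree (V n) := by
  classical
  have hc : ∀ i j, cf τ l i j ≠ 0 := by intro i j; unfold cf; split_ifs <;> simp [hτ]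
  rw [B_eq, map_mul, MonomialOrder.degree_mul _ (PP_ne _ hc w), PP_deg' _ hc, rename_monomial',
    MonomialOrder.degree_monomial]
  · simp
  · rw [rename_monomial']; simp

lemma A_deg {n : ℕ} {τ : ℂ} (hτ : τ ≠ 0) {l : Fin n → ℕ} (hl : Antitone l) :
    A τ l ≠ 0 ∧ MonomialOrder.lex.degree (A τ l) = fs l + MonomialOrder.lex.degree (V n) := by
  classical
  have hc : ∀ i j, cf τ l i j ≠ 0 := by intro i j; unfold cf; split_ifs <;> simp [hτ]
  have := lead_of (f := A τ l) (a := fun i => (fs l + MonomialOrder.lex.degree (V n)) i) ?_ ?_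
  · refine ⟨this.1, ?_⟩
    rw [this.2, fs_coe]
  · rw [fs_coe]
    unfold A
    rw [coeff_sum]
    have hterm : ∀ w : Equiv.Perm (Fin n),
        coeff (fs l + MonomialOrder.lex.degree (V n)) ((w.sign : ℤ) • rename w (B τ l)) =
        if l ∘ w.symm = l then 1 else 0 := by
      intro w
      rw [coeff_smul]
      split_ifs with h
      · have h1 := B_deg hτ l w
        rw [h] at h1
        rw [← h1]
        change (w.sign : ℤ) • MonomialOrder.lex.leadingCoeff (rename w (B τ l)) = 1
        rw [B_eq, map_mul, MonomialOrder.leadingCoeff_mul, rename_monomial',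
          MonomialOrder.leadingCoeff_monomial, PP_lc _ hc]
        · rcases Int.units_eq_one_or w.sign with h | h <;> simp [h]
        · intro i j hij hw
          have e1 : ∀ a, l (w a) = l a := by
            intro a
            have := congrFun h (w a)
            simpa using this.symm
          have e2 := hl hij.le
          have e3 := hl hw.le
          rw [e1, e1] at e3
          rw [cf, if_pos (le_antisymm e3 e2)]
      · have : coeff (fs l + MonomialOrder.lex.degree (V n)) (rename w (B τ l)) = 0 := by
          apply MonomialOrder.coeff_eq_zero_of_lt (m := MonomialOrder.lex)
          rw [B_deg hτ, map_add, map_add]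
          apply add_lt_add_left
          apply lt_of_le_of_ne (perm_le hl w.symm)
          intro hh
          exact h (fs_inj (toLex.injective hh))
        rw [this, smul_zero]
    simp_rw [hterm]
    rw [Finset.sum_boole]
    simp only [ne_eq, Nat.cast_eq_zero, Finset.card_eq_zero]
    intro h
    have : (1 : Equiv.Perm (Fin n)) ∈ (∅ : Finset (Equiv.Perm (Fin n))) := by
      rw [← h]; simp; rfl
    simp at this
  · intro d hd
    rw [fs_coe]
    unfold A at hd
    rw [coeff_sum] at hd
    obtain ⟨w, -, hw⟩ := Finset.exists_ne_zero_of_sum_ne_zero hd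
    rw [coeff_smul] at hw
    have hw : coeff d (rename w (B τ l)) ≠ 0 := right_ne_zero_of_smul hw
    have h1 := MonomialOrder.le_degree (m := MonomialOrder.lex) (mem_support_iff.2 hw)
    rw [B_deg hτ] at h1
    refine h1.trans ?_
    rw [map_add]
    change _ ≤ MonomialOrder.lex.toSyn (_ + _)
    rw [map_add]
    apply add_le_add_left
    exact perm_le hl w.symm

lemma PP_hom {n : ℕ} (c : Fin n → Fin n → ℂ) :
    (PP c).IsHomogeneous (∑ i : Fin n, ∑ _j ∈ Finset.Ioi i, 1) := by
  unfold PP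
  apply IsHomogeneous.prod
  intro i _
  apply IsHomogeneous.prod
  intro j _
  exact (isHomogeneous_X _ _).sub (isHomogeneous_C_mul_X _ _)

lemma A_hom {n : ℕ} (τ : ℂ) (l : Fin n → ℕ) :
    (A τ l).IsHomogeneous ((∑ i : Fin n, ∑ _j ∈ Finset.Ioi i, 1) + ∑ i, l i) := by
  unfold A
  apply IsHomogeneous.sum
  intro w _
  have : (rename w (B τ l)).IsHomogeneous ((∑ i : Fin n, ∑ _j ∈ Finset.Ioi i, 1) + ∑ i, l i) := by
    apply IsHomogeneous.rename_isHomogeneous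
    rw [B_eq, add_comm]
    apply IsHomogeneous.mul _ (PP_hom _)
    apply isHomogeneous_monomial
    rw [Finsupp.degree_eq_sum]
    simp
  rcases Int.units_eq_one_or w.sign with h | h
  · simpa [h] using this
  · simpa [h] using this.neg

lemma exists_P {n k : ℕ} (hk : 0 < k) (hn : k < n) {τ : ℂ} (hτ : IsPrimitiveRoot τ (k + 1))
    {l : Fin n → ℕ} (hl : Antitone l) (ha : Adm k l) :
    ∃ h : MvPolynomial (Fin n) ℂ, h.IsSymmetric ∧ h.IsHomogeneous (∑ i, l i) ∧ Lead h l ∧ W k τ h := by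
  have hτ0 : τ ≠ 0 := hτ.ne_zero (by omega)
  obtain ⟨Q, hQ⟩ := V_dvd (A τ l) (A_anti τ l)
  have hV := V_ne n
  obtain ⟨hA0, hAd⟩ := A_deg hτ0 hl
  have hQ0 : Q ≠ 0 := by rintro rfl; rw [mul_zero] at hQ; exact hA0 hQ
  refine ⟨Q, ?_, ?_, ⟨hQ0, ?_⟩, ?_⟩
  · intro w
    have := A_anti τ l w
    rw [hQ, map_mul, rename_V] at this
    apply mul_left_cancel₀ hV
    rcases Int.units_eq_one_or w.sign with h | h
    · simpa [h] using this
    · simpa [h] using this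
  · letI := gradedAlgebra (σ := Fin n) (R := ℂ)
    have hVh := PP_hom (n := n) (fun _ _ => 1)
    rw [PP_one] at hVh
    have h1 := DirectSum.coe_decompose_mul_add_of_left_mem (homogeneousSubmodule (Fin n) ℂ)
      (a := V n) (b := Q) (j := ∑ i, l i) hVh
    rw [← hQ, DirectSum.decompose_of_mem_same _ (A_hom τ l), hQ] at h1
    have h2 := mul_left_cancel₀ hV h1
    rw [h2]
    exact SetLike.coe_mem ((DirectSum.decompose (homogeneousSubmodule (Fin n) ℂ)) Q (∑ i, l i))
  · rw [hQ, MonomialOrder.degree_mul hV hQ0, add_comm] at hAd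
    exact add_right_cancel hAd
  · apply dens hk hn hτ
    intro z hz hz1 _
    have := A_wheel hn hτ hl ha z hz
    rw [hQ, map_mul] at this
    exact (mul_eq_zero.1 this).resolve_left (V_eval_ne hz1)

end HL


namespace HL

lemma coeff_perm {n : ℕ} {g : MvPolynomial (Fin n) ℂ} (hg : g.IsSymmetric) (w : Equiv.Perm (Fin n))
    (b : Fin n → ℕ) : coeff (fs (b ∘ w)) g = coeff (fs b) g := by
  conv_rhs => rw [← hg w]
  have : fs b = (fs (b ∘ w)).mapDomain w := by
    ext i
    obtain ⟨j, rfl⟩ := w.surjective i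
    rw [Finsupp.mapDomain_apply w.injective]
    simp
  rw [this, coeff_rename_mapDomain _ w.injective]

lemma exists_perm {n k : ℕ} (hn : k < n) {b : Fin n → ℕ} (hb : ¬ Adm k b) :
    ∃ w : Equiv.Perm (Fin n), ∃ a : ℕ, ∀ j : Fin n, (j : ℕ) ≤ k → b (w j) = a := by
  classical
  unfold Adm at hb
  push Not at hb
  obtain ⟨a, ha⟩ := hb
  obtain ⟨s, hs, hsc⟩ := Finset.exists_subset_card_eq (Nat.succ_le_of_lt ha)
  have hc : Fintype.card {j : Fin n // (j : ℕ) ≤ k} = Fintype.card {j : Fin n // j ∈ s} := by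
    rw [Fintype.card_coe, hsc, Fintype.card_subtype]
    have : (Finset.univ.filter fun j : Fin n => (j : ℕ) ≤ k) = Finset.Iic ⟨k, hn⟩ := by
      ext j; simp [Fin.le_def]
    rw [this]; simp
  let e := Fintype.equivOfCardEq hc
  refine ⟨e.extendSubtype, a, fun j hj => ?_⟩
  have := e.extendSubtype_mem j hj
  have := hs this
  simpa using this

lemma par_eq {n k : ℕ} (hn : k < n) (τ : ℂ) (g : MvPolynomial (Fin n) ℂ) :
    par k hn τ g = ∑ d ∈ g.support,
      monomial (d.mapDomain (phi k hn)) (coeff d g * ∏ j, cc k τ j ^ d j) := by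
  conv_lhs => rw [g.as_sum]
  rw [map_sum]
  apply Finset.sum_congr rfl
  intro d _
  unfold par
  rw [aeval_monomial, Finsupp.prod_fintype _ _ (by simp)]
  simp only [mul_pow, Finset.prod_mul_distrib]
  rw [algebraMap_eq, ← mul_assoc]
  have h1 : (∏ x, (X (phi k hn x) : MvPolynomial (Fin n) ℂ) ^ d x) =
      monomial (d.mapDomain (phi k hn)) 1 := by
    rw [← rename_monomial, monomial_eq, Finsupp.prod_fintype _ _ (by simp)]
    simp
  rw [h1]
  simp only [← C_pow, ← map_prod, ← C_mul]
  rw [C_mul_monomial, mul_one]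

lemma W_inj {n k : ℕ} (hn : k < n) {τ : ℂ} (hτ : τ ≠ 0) {g : MvPolynomial (Fin n) ℂ}
    (hs : g.IsSymmetric) (hW : W k τ g) (hc : ∀ b : Fin n → ℕ, Adm k b → coeff (fs b) g = 0) :
    g = 0 := by
  classical
  by_contra h0
  obtain ⟨b0, hb0, hmax⟩ := Finset.exists_max_image g.support (fun d => ∑ j, (d j) ^ 2)
    (support_nonempty.2 h0)
  have hna : ¬ Adm k b0 := by
    intro h
    have := hc _ h
    rw [fs_coe] at this
    exact mem_support_iff.1 hb0 this
  obtain ⟨w, a, hw⟩ := exists_perm hn hna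
  set b : Fin n → ℕ := b0 ∘ w with hb
  have hcb : coeff (fs b) g ≠ 0 := by
    rw [hb, coeff_perm hs, fs_coe]; exact mem_support_iff.1 hb0
  have hsum : ∑ j, b j ^ 2 = ∑ j, b0 j ^ 2 := Equiv.sum_comp w (fun j => b0 j ^ 2)
  have hphi : ∀ j, b (phi k hn j) = b j := by
    intro j
    unfold phi
    split_ifs with h
    · rw [hb]; simp only [Function.comp]; rw [hw _ h, hw _ (by simp)]
    · rfl
  have key : ∀ d ∈ g.support, d.mapDomain (phi k hn) = (fs b).mapDomain (phi k hn) → d = fs b := by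
    intro d hd he
    have h1 : ∀ d : Fin n →₀ ℕ, (d.mapDomain (phi k hn)).sum (fun j m => (m : ℤ) * b j)
        = ∑ j, (d j : ℤ) * b j := by
      intro d
      rw [Finsupp.sum_mapDomain_index (by simp) (by intro _ _ _; push_cast; ring),
        Finsupp.sum_fintype _ _ (by simp)]
      simp [hphi]
    have h2 : ∑ j, (d j : ℤ) * b j = ∑ j, (b j : ℤ) * b j := by
      rw [← h1, he, h1]; rfl
    have h3 : ∑ j, (d j : ℤ) ^ 2 ≤ ∑ j, (b j : ℤ) ^ 2 := by
      have := hmax d hd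
      rw [← hsum] at this
      exact_mod_cast this
    have h4 : ∑ j, ((d j : ℤ) - b j) ^ 2 ≤ 0 := by
      have : ∑ j, ((d j : ℤ) - b j) ^ 2 = ∑ j, (d j : ℤ) ^ 2 - 2 * ∑ j, (d j : ℤ) * b j
          + ∑ j, (b j : ℤ) ^ 2 := by
        rw [Finset.mul_sum, ← Finset.sum_sub_distrib, ← Finset.sum_add_distrib]
        apply Finset.sum_congr rfl; intros; ring
      rw [this, h2]
      have h5 : ∑ j, (b j : ℤ) * b j = ∑ j, (b j : ℤ) ^ 2 := by
        apply Finset.sum_congr rfl; intros; ring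
      rw [h5]; linarith
    have h5 := (Finset.sum_eq_zero_iff_of_nonneg (fun j _ => sq_nonneg _)).1
      (le_antisymm h4 (Finset.sum_nonneg (fun j _ => sq_nonneg ((d j : ℤ) - b j))))
    ext j
    have := h5 j (Finset.mem_univ _)
    have := pow_eq_zero_iff (two_ne_zero) |>.1 this
    simp; omega
  rw [W_iff hn, par_eq] at hW
  have h1 := congrArg (coeff ((fs b).mapDomain (phi k hn))) hW
  rw [coeff_sum, Finset.sum_eq_single (fs b)] at h1
  · rw [coeff_monomial, if_pos rfl, coeff_zero] at h1
    refine mul_ne_zero hcb ?_ h1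
    rw [Finset.prod_ne_zero_iff]
    intro j _
    apply pow_ne_zero
    unfold cc; split_ifs
    · exact pow_ne_zero _ hτ
    · exact one_ne_zero
  · intro d hd hne
    rw [coeff_monomial, if_neg]
    intro h
    exact hne (key d hd h)
  · intro h
    exact absurd (mem_support_iff.2 hcb) h

/-! decomposition of partitions -/

lemma slim_step {r n : ℕ} {l : Fin n → ℕ} (hs : IsSlim r n l) (j : ℕ) (hj : j < n)
    (hj' : j + 1 < n) : l ⟨j, hj⟩ - l ⟨j + 1, hj'⟩ < r - 1 := hs.1 ⟨j, hj⟩ hj'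

/-- induction from the last index downwards -/
lemma down_ind {n : ℕ} {P : Fin n → Prop} (h0 : ∀ i : Fin n, (i : ℕ) = n - 1 → P i)
    (h1 : ∀ (j : ℕ) (hj : j < n) (hj' : j + 1 < n), P ⟨j + 1, hj'⟩ → P ⟨j, hj⟩) : ∀ i, P i := by
  have : ∀ m : ℕ, ∀ i : Fin n, n - 1 - (i : ℕ) = m → P i := by
    intro m
    induction m with
    | zero => intro i hi; exact h0 i (by omega)
    | succ m ih =>
      intro i hi
      exact h1 i i.2 (by omega) (ih ⟨i + 1, by omega⟩ (by simp; omega))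
  intro i; exact this _ i rfl

lemma slim_inj {r n : ℕ} {a b : Fin n → ℕ} (ha : Antitone a) (hb : Antitone b)
    (sa : IsSlim r n a) (sb : IsSlim r n b) (h : ∀ i, a i % (r - 1) = b i % (r - 1)) : a = b := by
  funext i
  revert i
  apply down_ind
  · intro i hi
    have h1 := sa.2 i hi
    have h2 := sb.2 i hi
    have := h i
    rwa [Nat.mod_eq_of_lt h1, Nat.mod_eq_of_lt h2] at this
  · intro j hj hj' ih
    have h1 := slim_step sa j hj hj'
    have h2 := slim_step sb j hj hj'
    have h3 : a ⟨j+1, hj'⟩ ≤ a ⟨j, hj⟩ := ha (by simp)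
    have h4 : b ⟨j+1, hj'⟩ ≤ b ⟨j, hj⟩ := hb (by simp)
    have h5 : a ⟨j, hj⟩ ≡ b ⟨j, hj⟩ [MOD (r - 1)] := h ⟨j, hj⟩
    rw [ih] at h1 h3
    set c := b ⟨j+1, hj'⟩
    have h6 : c + (a ⟨j, hj⟩ - c) ≡ c + (b ⟨j, hj⟩ - c) [MOD (r - 1)] := by
      rw [Nat.add_sub_cancel' h3, Nat.add_sub_cancel' h4]; exact h5
    have h7 := Nat.ModEq.add_left_cancel' c h6
    have h8 := Nat.ModEq.eq_of_lt_of_lt h7 h1 h2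
    omega

lemma decomp_unique {r n : ℕ} {l l' a b : Fin n → ℕ} (ha : Antitone a) (hb : Antitone b)
    (hr : 0 < r - 1)
    (sa : IsSlim r n a) (sb : IsSlim r n b)
    (h : ∀ i, (r - 1) * l i + a i = (r - 1) * l' i + b i) : l = l' ∧ a = b := by
  have hab : a = b := by
    apply slim_inj ha hb sa sb
    intro i
    have := congrArg (· % (r - 1)) (h i)
    simpa [Nat.mul_add_mod] using this
  refine ⟨?_, hab⟩
  funext i
  have := h i
  rw [hab] at this
  exact Nat.eq_of_mul_eq_mul_left hr (by omega)

lemma decomp_exists {r n : ℕ} (hr : 0 < r - 1) {v : Fin n → ℕ} (hv : Antitone v) :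
    ∃ l a : Fin n → ℕ, Antitone l ∧ Antitone a ∧ IsSlim r n a ∧
      ∀ i, v i = (r - 1) * l i + a i := by
  let N : ℕ → ℕ := fun j => if h : j < n then v ⟨j, h⟩ else 0
  have hN : ∀ j, N (j+1) ≤ N j := by
    intro j
    simp only [N]
    split_ifs with h1 h2
    · exact hv (by simp)
    · omega
    · omega
    · omega
  let L : ℕ → ℕ := fun j => ∑ i ∈ Finset.Ico j n, (N i - N (i+1)) / (r - 1)
  let U : ℕ → ℕ := fun j => ∑ i ∈ Finset.Ico j n, (N i - N (i+1)) % (r - 1)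
  have hLs : ∀ j, j < n → L j = (N j - N (j+1)) / (r - 1) + L (j+1) := by
    intro j hj; simp only [L]; rw [Finset.sum_eq_sum_Ico_succ_bot hj]
  have hUs : ∀ j, j < n → U j = (N j - N (j+1)) % (r - 1) + U (j+1) := by
    intro j hj; simp only [U]; rw [Finset.sum_eq_sum_Ico_succ_bot hj]
  have hUn : ∀ j, n ≤ j → U j = 0 := by
    intro j hj; simp only [U]; rw [Finset.Ico_eq_empty (by omega)]; rfl
  have hLanti : Antitone L := by
    intro a b hab
    exact Finset.sum_le_sum_of_subset (Finset.Ico_subset_Ico_left hab)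
  have hUanti : Antitone U := by
    intro a b hab
    exact Finset.sum_le_sum_of_subset (Finset.Ico_subset_Ico_left hab)
  refine ⟨fun i => L i, fun i => U i, fun a b h => hLanti h, fun a b h => hUanti h, ⟨?_, ?_⟩, ?_⟩
  · intro i hi
    simp only
    rw [hUs i i.2, Nat.add_sub_cancel]
    exact Nat.mod_lt _ hr
  · intro i hi
    simp only
    rw [hUs i i.2, hUn _ (by omega), add_zero]
    exact Nat.mod_lt _ hr
  · have hvN : ∀ i : Fin n, v i = N i := by intro i; simp [N]
    intro i
    rw [hvN]
    have step : ∀ j, j < n → N (j+1) = (r-1) * L (j+1) + U (j+1) → N j = (r-1) * L j + U j := by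
      intro j hj h
      rw [hLs j hj, hUs j hj]
      have h1 := Nat.div_add_mod (N j - N (j+1)) (r - 1)
      have h2 := hN j
      rw [mul_add]
      omega
    revert i
    apply down_ind
    · intro i hi
      apply step i i.2
      have : (i : ℕ) + 1 = n := by omega
      rw [this]
      simp [N, L, U]
    · intro j hj hj' ih
      exact step j hj ih

/-! spanning -/

/-- basis elements -/
noncomputable def BB {n : ℕ} (h : (Fin n → ℕ) → MvPolynomial (Fin n) ℂ) (R : ℕ)
    (p : (Fin n → ℕ) × (Fin n → ℕ)) : MvPolynomial (Fin n) ℂ := expand R (h p.1) * M p.2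

lemma expand_symm {n R : ℕ} {f : MvPolynomial (Fin n) ℂ} (hf : f.IsSymmetric) :
    (expand R f).IsSymmetric := by
  intro w
  rw [rename_expand, hf w]

lemma lead_antitone {n : ℕ} {f : MvPolynomial (Fin n) ℂ} (hf : f.IsSymmetric) {v : Fin n → ℕ}
    (hv : Lead f v) : Antitone v := by
  intro i j hij
  by_contra hlt
  push Not at hlt
  have hij : i < j := lt_of_le_of_ne hij (by rintro rfl; omega)
  have h1 : coeff (fs (v ∘ Equiv.swap i j)) f ≠ 0 := by
    rw [coeff_perm hf]; exact hv.coeff_ne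
  have h2 := hv.le h1
  apply absurd h2
  rw [not_le]
  refine ⟨i, ?_, ?_⟩
  · intro d hd
    have h1 : d ≠ i := ne_of_lt hd
    have h2 : d ≠ j := ne_of_lt (lt_trans hd hij)
    simp [Equiv.swap_apply_of_ne_of_ne h1 h2]
  · simpa using hlt

lemma span_sym {n r : ℕ} (hr : 0 < r - 1) (h : (Fin n → ℕ) → MvPolynomial (Fin n) ℂ)
    (hh : ∀ l, Antitone l → (h l).IsSymmetric ∧ Lead (h l) l) :
    ∀ f : MvPolynomial (Fin n) ℂ, f.IsSymmetric → f ∈ Submodule.span ℂ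
      (BB h (r - 1) '' {p | Antitone p.1 ∧ Antitone p.2 ∧ IsSlim r n p.2}) := by
  have : ∀ s : MonomialOrder.lex.syn, ∀ f : MvPolynomial (Fin n) ℂ, f.IsSymmetric →
      MonomialOrder.lex.toSyn (MonomialOrder.lex.degree f) = s → f ∈ Submodule.span ℂ
      (BB h (r - 1) '' {p | Antitone p.1 ∧ Antitone p.2 ∧ IsSlim r n p.2}) := by
    intro s
    induction s using WellFoundedLT.induction with
    | ind s ih =>
      intro f hf hs
      by_cases h0 : f = 0
      · rw [h0]; exact Submodule.zero_mem _
      have hL : Lead f (fun i => MonomialOrder.lex.degree f i) := ⟨h0, (fs_coe _).symm⟩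
      set v : Fin n → ℕ := fun i => MonomialOrder.lex.degree f i with hv
      obtain ⟨l, a, hl, ha, hsl, he⟩ := decomp_exists hr (lead_antitone hf hL)
      have hBL : Lead (BB h (r-1) (l, a)) v := by
        have := ((hh l hl).2.expand (show r - 1 ≠ 0 by omega)).mul (M_lead ha)
        have e : v = (fun i => (r-1) * l i + a i) := funext he
        rw [e]; exact this
      have hBs : (BB h (r-1) (l, a)).IsSymmetric := (expand_symm (hh l hl).1).mul (M_symm a)
      have hmem : BB h (r-1) (l, a) ∈ Submodule.span ℂ
        (BB h (r - 1) '' {p | Antitone p.1 ∧ Antitone p.2 ∧ IsSlim r n p.2}) :=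
        Submodule.subset_span ⟨(l, a), ⟨hl, ha, hsl⟩, rfl⟩
      set c := coeff (fs v) f / coeff (fs v) (BB h (r-1) (l, a)) with hc
      have hfe : f = (f - c • BB h (r-1) (l, a)) + c • BB h (r-1) (l, a) := by ring
      have hf's : (f - c • BB h (r-1) (l, a)).IsSymmetric := hf.sub (hBs.smul c)
      rw [hfe]
      refine Submodule.add_mem _ ?_ (Submodule.smul_mem _ _ hmem)
      by_cases h0' : f - c • BB h (r-1) (l, a) = 0
      · rw [h0']; exact Submodule.zero_mem _
      refine ih _ ?_ _ hf's rfl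
      have hne : coeff (MonomialOrder.lex.degree (f - c • BB h (r-1) (l, a)))
        (f - c • BB h (r-1) (l, a)) ≠ 0 := MonomialOrder.coeff_degree_ne_zero_iff.2 h0'
      rw [← hs]
      have hle : MonomialOrder.lex.toSyn (MonomialOrder.lex.degree (f - c • BB h (r-1) (l, a)))
          ≤ MonomialOrder.lex.toSyn (MonomialOrder.lex.degree f) := by
        rw [hL.2]
        generalize MonomialOrder.lex.degree (f - c • BB h (r-1) (l, a)) = d at hne
        rw [coeff_sub, coeff_smul] at hne
        by_cases hd : coeff d f = 0
        · rw [hd, zero_sub, neg_ne_zero] at hne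
          exact hBL.le (right_ne_zero_of_smul hne)
        · exact hL.le hd
      refine lt_of_le_of_ne hle ?_
      intro heq
      have heq := MonomialOrder.lex.toSyn.injective heq
      rw [heq, hL.2, coeff_sub, coeff_smul, hc, smul_eq_mul, div_mul_cancel₀ _ hBL.coeff_ne] at hne
      simp at hne
  intro f hf
  exact this _ f hf rfl

/-- type of slim partitions -/
abbrev Sl (r n : ℕ) := {a : Fin n → ℕ // Antitone a ∧ IsSlim r n a}

/-- residues -/
def resid {r n : ℕ} (hr : 0 < r - 1) (a : Sl r n) : Fin n → Fin (r - 1) :=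
  fun i => ⟨a.1 i % (r - 1), Nat.mod_lt _ hr⟩

lemma resid_inj {r n : ℕ} (hr : 0 < r - 1) : Function.Injective (resid (n := n) hr) := by
  intro a b h
  apply Subtype.ext
  apply slim_inj a.2.1 b.2.1 a.2.2 b.2.2
  intro i
  exact congrArg Fin.val (congrFun h i)

lemma interp {n r : ℕ} (hr : 0 < r - 1) {q : ℂ} (hq : IsPrimitiveRoot q (r - 1)) {x : Fin n → ℂ}
    (hx0 : ∀ j, x j ≠ 0) (hx : Function.Injective (fun j => x j ^ (r - 1))) [Fintype (Sl r n)]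
    (c : Sl r n → ℂ)
    (hc : ∀ s : Fin n → Fin (r - 1),
      ∑ a, c a * eval (fun j => q ^ (s j : ℕ) * x j) (M a.1) = 0) : c = 0 := by
  classical
  have hqR : ∀ m : ℕ, (q ^ m) ^ (r - 1) = 1 := by
    intro m; rw [← pow_mul, mul_comm, pow_mul, hq.pow_eq_one, one_pow]
  let pt : (Fin n → Fin (r - 1)) → Fin n → ℂ := fun s j => q ^ (s j : ℕ) * x j
  let L : (Sl r n → ℂ) →ₗ[ℂ] ((Fin n → Fin (r - 1)) → ℂ) :=
    { toFun := fun c s => ∑ a, c a * eval (pt s) (M a.1)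
      map_add' := by
        intro c d; funext s; simp [add_mul, Finset.sum_add_distrib]
      map_smul' := by
        intro m d; funext s; simp [Finset.mul_sum, mul_assoc] }
  let E : MvPolynomial (Fin n) ℂ →ₗ[ℂ] ((Fin n → Fin (r - 1)) → ℂ) :=
    { toFun := fun f s => eval (pt s) f
      map_add' := by intro c d; funext s; simp
      map_smul' := by intro m d; funext s; simp [smul_eval] }
  have hE : ∀ f : MvPolynomial (Fin n) ℂ, f.IsSymmetric → E f ∈ LinearMap.range L := by
    intro f hf
    have h1 := span_sym (r := r) hr (M (n := n)) (fun l hl => ⟨M_symm l, M_lead hl⟩) f hf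
    have h2 : Submodule.span ℂ
      (BB (M (n := n)) (r - 1) '' {p | Antitone p.1 ∧ Antitone p.2 ∧ IsSlim r n p.2}) ≤
        (LinearMap.range L).comap E := by
      rw [Submodule.span_le]
      rintro _ ⟨⟨l, a⟩, ⟨hl, ha, hs⟩, rfl⟩
      refine ⟨Pi.single (⟨a, ha, hs⟩ : Sl r n) (eval (fun j => x j ^ (r-1)) (M l)), ?_⟩
      funext s
      simp only [L, E, LinearMap.coe_mk, AddHom.coe_mk]
      rw [Finset.sum_eq_single (⟨a, ha, hs⟩ : Sl r n)]
      · rw [Pi.single_eq_same, BB, map_mul, eval_expand]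
        congr 2
        have : (pt s ^ (r-1)) = fun j => x j ^ (r-1) := by
          funext j; simp only [pt, Pi.pow_apply]; rw [mul_pow, hqR, one_mul]
        rw [← this]
      · intro b _ hb; rw [Pi.single_eq_of_ne hb, zero_mul]
      · simp
    exact h2 h1
  have hsurj : Function.Surjective L := by
    rw [← LinearMap.range_eq_top, eq_top_iff]
    have hsingle : ∀ s0, Pi.single s0 (1:ℂ) ∈ LinearMap.range L := by
      intro s0
      let H : MvPolynomial (Fin n) ℂ := ∏ i : Fin n, ∏ s ∈ Finset.univ.erase (s0 i),
        ∏ j : Fin n, (C (q ^ (s : ℕ) * x i) - X j)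
      have hH : H.IsSymmetric := by
        intro w
        simp only [H, map_prod, map_sub, rename_C, rename_X]
        apply Finset.prod_congr rfl; intro i _
        apply Finset.prod_congr rfl; intro s _
        exact Equiv.prod_comp w (fun j => (C (q ^ (s : ℕ) * x i) - X j : MvPolynomial (Fin n) ℂ))
      have hH1 : ∀ s, s ≠ s0 → E H s = 0 := by
        intro s hs
        obtain ⟨i, hi⟩ := Function.ne_iff.1 hs
        simp only [E, H, LinearMap.coe_mk, AddHom.coe_mk, map_prod, map_sub, eval_C, eval_X]
        apply Finset.prod_eq_zero (Finset.mem_univ i)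
        apply Finset.prod_eq_zero (i := s i) (by simpa using hi)
        apply Finset.prod_eq_zero (Finset.mem_univ i)
        simp [pt]
      have hH2 : E H s0 ≠ 0 := by
        simp only [E, H, LinearMap.coe_mk, AddHom.coe_mk, map_prod, map_sub, eval_C, eval_X]
        rw [Finset.prod_ne_zero_iff]; intro i _
        rw [Finset.prod_ne_zero_iff]; intro s hs
        rw [Finset.prod_ne_zero_iff]; intro j _ h
        rw [sub_eq_zero] at h
        simp only [pt] at h
        have h1 := congrArg (· ^ (r - 1)) h
        simp only [mul_pow, hqR, one_mul] at h1
        have h2 := hx h1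
        subst h2
        have h3 := mul_right_cancel₀ (hx0 i) h
        have h4 := hq.pow_inj s.2 (s0 i).2 h3
        exact (Finset.mem_erase.1 hs).1 (Fin.ext h4)
      have : Pi.single s0 (1:ℂ) = (E H s0)⁻¹ • E H := by
        funext s
        by_cases hs : s = s0
        · subst hs; simp [hH2]
        · simp [hs, hH1 s hs]
      rw [this]
      exact Submodule.smul_mem _ _ (hE H hH)
    intro y _
    rw [pi_eq_sum_univ y]
    apply Submodule.sum_mem
    intro s _
    apply Submodule.smul_mem
    convert hsingle s using 1
    funext t
    simp [Pi.single_apply, eq_comm]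
  have hcard : Module.finrank ℂ (Sl r n → ℂ) = Module.finrank ℂ ((Fin n → Fin (r - 1)) → ℂ) := by
    apply le_antisymm
    · rw [Module.finrank_fintype_fun_eq_card, Module.finrank_fintype_fun_eq_card]
      exact Fintype.card_le_of_injective _ (resid_inj hr)
    · exact LinearMap.finrank_le_finrank_of_surjective hsurj
  have hinj := (LinearMap.injective_iff_surjective_of_finrank_eq_finrank hcard).2 hsurj
  apply hinj
  rw [map_zero]
  funext s
  exact hc s

end HL


namespace HL

/-- the wheel condition in the frozen form -/
def FW {n : ℕ} (k r : ℕ) (t q : ℂ) (f : MvPolynomial (Fin n) ℂ) : Prop :=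
  ∀ (s : ℕ → ℕ), (∀ i, s i ≤ r - 2) → ∀ (x : ℂ) (y : Fin n → ℂ),
            MvPolynomial.eval
              (fun j : Fin n => if (j : ℕ) = 0 then x
                else if (j : ℕ) ≤ k then t ^ (j : ℕ) * q ^ (s (j : ℕ)) * x else y j)
              f = 0

lemma FW_iff {n k r : ℕ} (hr : 2 ≤ r) (hn : k < n) {t q : ℂ} (ht : t ≠ 0)
    (hq : IsPrimitiveRoot q (r - 1)) (f : MvPolynomial (Fin n) ℂ) :
    FW k r t q f ↔ ∀ z : Fin n → ℂ, Wheel k (t ^ (r - 1)) (fun j => z j ^ (r - 1)) →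
      eval z f = 0 := by
  constructor
  · intro hf z hz
    have h1 : ∀ j : ℕ, ∃ s ≤ r - 2, ∀ h : j < n, j ≤ k →
        z ⟨j, h⟩ = t ^ j * q ^ s * z ⟨0, by omega⟩ := by
      intro j
      by_cases hj : j ≤ k
      · have hz' := hz ⟨0, by omega⟩ ⟨j, by omega⟩ rfl hj
        simp only at hz'
        by_cases h0 : z ⟨0, by omega⟩ = 0
        · refine ⟨0, by omega, fun h _ => ?_⟩
          rw [h0, mul_zero]
          rw [h0, zero_pow (by omega), mul_zero] at hz'
          exact pow_eq_zero_iff (by omega) |>.1 hz'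
        · have h2 : (z ⟨j, by omega⟩ / (t ^ j * z ⟨0, by omega⟩)) ^ (r - 1) = 1 := by
            rw [div_pow, hz', mul_pow, ← pow_mul, ← pow_mul, mul_comm j]
            exact div_self (mul_ne_zero (pow_ne_zero _ ht) (pow_ne_zero _ h0))
          haveI : NeZero (r - 1) := ⟨by omega⟩
          obtain ⟨s, hs, e⟩ := hq.eq_pow_of_pow_eq_one h2
          refine ⟨s, by omega, fun h _ => ?_⟩
          rw [e]
          have := pow_ne_zero j ht
          field_simp
      · exact ⟨0, by omega, fun _ h => absurd h hj⟩
    choose s hs he using h1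
    have := hf s hs (z ⟨0, by omega⟩) z
    convert this using 2
    congr 1
    funext j
    split_ifs with h1 h2
    · congr 1; exact Fin.ext h1
    · exact he j j.2 h2
    · rfl
  · intro hf s hs x y
    apply hf
    intro i j hi hj
    simp only [hi, if_true]
    by_cases h0 : (j : ℕ) = 0
    · simp [h0]
    · simp only [h0, if_false, hj, if_true]
      rw [mul_pow, mul_pow, ← pow_mul, ← pow_mul, ← pow_mul, mul_comm (s j), pow_mul q,
        hq.pow_eq_one, one_pow, mul_one, mul_comm (j : ℕ)]

lemma expand_hom {n R d : ℕ} {f : MvPolynomial (Fin n) ℂ} (hf : f.IsHomogeneous d) :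
    (expand R f).IsHomogeneous (R * d) := by
  classical
  intro e he
  have := support_expand_subset f (mem_support_iff.2 he)
  obtain ⟨d', hd', rfl⟩ := Finset.mem_image.1 this
  have := hf (mem_support_iff.1 hd')
  rw [map_nsmul, this, smul_eq_mul]

lemma exists_h {n k : ℕ} (hk : 0 < k) (hn : k < n) {τ : ℂ} (hτ : IsPrimitiveRoot τ (k + 1)) :
    ∃ h : (Fin n → ℕ) → MvPolynomial (Fin n) ℂ, ∀ l, Antitone l →
      (h l).IsSymmetric ∧ (h l).IsHomogeneous (∑ i, l i) ∧ Lead (h l) l ∧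
      (Adm k l → W k τ (h l)) ∧ (¬ Adm k l → ∀ b, Adm k b → coeff (fs b) (h l) = 0) := by
  classical
  apply Classical.skolem (p := fun l g => Antitone l →
      (g : MvPolynomial (Fin n) ℂ).IsSymmetric ∧ g.IsHomogeneous (∑ i, l i) ∧ Lead g l ∧
      (Adm k l → W k τ g) ∧ (¬ Adm k l → ∀ b, Adm k b → coeff (fs b) g = 0)).1
  intro l
  by_cases hl : Antitone l
  · by_cases ha : Adm k l
    · obtain ⟨g, h1, h2, h3, h4⟩ := exists_P hk hn hτ hl ha
      exact ⟨g, fun _ => ⟨h1, h2, h3, fun _ => h4, fun h => absurd ha h⟩⟩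
    · exact ⟨M l, fun _ => ⟨M_symm l, M_hom l, M_lead hl, fun h => absurd h ha,
        fun h b hb => M_coeff_adm h b hb⟩⟩
  · exact ⟨0, fun h => absurd h hl⟩

lemma BB_lead {n r : ℕ} (hr : 0 < r - 1) {h : (Fin n → ℕ) → MvPolynomial (Fin n) ℂ}
    {l a : Fin n → ℕ} (hl : Lead (h l) l) (ha : Antitone a) :
    Lead (BB h (r - 1) (l, a)) (fun i => (r - 1) * l i + a i) :=
  (hl.expand (show r - 1 ≠ 0 by omega)).mul (M_lead ha)

lemma li {n r : ℕ} (hr : 0 < r - 1) {h : (Fin n → ℕ) → MvPolynomial (Fin n) ℂ}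
    (hh : ∀ l, Antitone l → Lead (h l) l)
    (S : Set ((Fin n → ℕ) × (Fin n → ℕ)))
    (hS : ∀ p ∈ S, Antitone p.1 ∧ Antitone p.2 ∧ IsSlim r n p.2) :
    LinearIndependent ℂ (fun p : S => BB h (r - 1) p.1) := by
  classical
  rw [linearIndependent_iff']
  intro s c hc
  by_contra hne
  push Not at hne
  obtain ⟨p0, hp0, hc0⟩ := hne
  let e : S → Fin n → ℕ := fun p i => (r - 1) * p.1.1 i + p.1.2 i
  have hL : ∀ p : S, Lead (BB h (r - 1) p.1) (e p) := fun p =>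
    BB_lead hr (hh _ (hS p p.2).1) (hS p p.2).2.1
  obtain ⟨p, hp, hmax⟩ := Finset.exists_max_image (s.filter fun p => c p ≠ 0)
    (fun p => toLex (fs (e p))) ⟨p0, by simp [hp0, hc0]⟩
  rw [Finset.mem_filter] at hp
  have h1 := congrArg (coeff (fs (e p))) hc
  rw [coeff_sum, coeff_zero, Finset.sum_eq_single p] at h1
  · rw [coeff_smul, smul_eq_mul] at h1
    exact (mul_ne_zero hp.2 (hL p).coeff_ne) h1
  · intro b hb hbp
    rw [coeff_smul, smul_eq_mul]
    by_contra hne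
    have h2 := hmax b (by rw [Finset.mem_filter]; exact ⟨hb, left_ne_zero_of_mul hne⟩)
    have h3 := (hL b).le (right_ne_zero_of_mul hne)
    have h4 : e p = e b := fs_inj (toLex.injective (le_antisymm h3 h2))
    apply hbp
    have := decomp_unique (hS b b.2).2.1 (hS p p.2).2.1 hr (hS b b.2).2.2 (hS p p.2).2.2
      (fun i => (congrFun h4 i).symm)
    exact Subtype.ext (Prod.ext this.1 this.2)
  · intro h; exact absurd hp.1 h

lemma vanish {n k r : ℕ} (hk : 0 < k) (hr : 2 ≤ r) (hn : k < n) {t q : ℂ}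
    (hτ : IsPrimitiveRoot (t ^ (r - 1)) (k + 1))
    (hq : IsPrimitiveRoot q (r - 1)) [Fintype (Sl r n)] (g : Sl r n → MvPolynomial (Fin n) ℂ)
    (hgs : ∀ a, (g a).IsSymmetric)
    (hgc : ∀ a, ∀ b, Adm k b → coeff (fs b) (g a) = 0)
    (hf : ∀ z : Fin n → ℂ, Wheel k (t ^ (r - 1)) (fun j => z j ^ (r - 1)) →
      eval z (∑ a, expand (r - 1) (g a) * M a.1) = 0) (a : Sl r n) : g a = 0 := by
  apply W_inj hn (hτ.ne_zero (by omega)) (hgs a) _ (hgc a)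
  apply dens hk hn hτ
  intro z hz hzi hz0
  have h1 : ∀ j, ∃ x, x ^ (r - 1) = z j := fun j => IsAlgClosed.exists_pow_nat_eq (z j) (by omega)
  choose x hx using h1
  have hx' : (fun j => x j ^ (r - 1)) = z := funext hx
  have := interp (r := r) (by omega) hq (x := x) (fun j h => hz0 j (by
      rw [← hx, h, zero_pow (by omega)])) (by rw [hx']; exact hzi) (fun a => eval z (g a)) ?_
  · exact congrFun this a
  intro s
  have hp : (fun j => (q ^ (s j : ℕ) * x j) ^ (r - 1)) = z := by
    funext j
    rw [mul_pow, ← pow_mul, mul_comm (s j : ℕ), pow_mul, hq.pow_eq_one, one_pow, one_mul, hx]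
  have h2 := hf (fun j => q ^ (s j : ℕ) * x j) (by rw [hp]; exact hz)
  rw [map_sum] at h2
  rw [← h2]
  refine Finset.sum_congr rfl fun b _ => ?_
  rw [map_mul, eval_expand]
  congr 2
  rw [← hp]; rfl

/-- symmetric polynomials with vanishing admissible coefficients -/
def NA (n k : ℕ) : Submodule ℂ (MvPolynomial (Fin n) ℂ) where
  carrier := {g | g.IsSymmetric ∧ ∀ b, Adm k b → coeff (fs b) g = 0}
  add_mem' := fun ha hb => ⟨ha.1.add hb.1, fun b h => by rw [coeff_add, ha.2 b h, hb.2 b h, add_zero]⟩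
  zero_mem' := ⟨IsSymmetric.zero, fun _ _ => coeff_zero _⟩
  smul_mem' := fun c _ ha => ⟨ha.1.smul c, fun b h => by rw [coeff_smul, ha.2 b h, smul_zero]⟩

lemma nonadm {n k r : ℕ} (hr : 0 < r - 1) [Fintype (Sl r n)]
    {h : (Fin n → ℕ) → MvPolynomial (Fin n) ℂ}
    (hh : ∀ l, Antitone l → ¬ Adm k l → h l ∈ NA n k) (f : MvPolynomial (Fin n) ℂ)
    (hf : f ∈ Submodule.span ℂ
      (BB h (r - 1) '' {p | Antitone p.1 ∧ ¬ Adm k p.1 ∧ Antitone p.2 ∧ IsSlim r n p.2})) :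
    ∃ g : Sl r n → MvPolynomial (Fin n) ℂ, (∀ a, g a ∈ NA n k) ∧
      f = ∑ a, expand (r - 1) (g a) * M a.1 := by
  classical
  induction hf using Submodule.span_induction with
  | mem x hx =>
    obtain ⟨⟨l, a⟩, ⟨h1, h2, h3, h4⟩, rfl⟩ := hx
    refine ⟨Pi.single (⟨a, h3, h4⟩ : Sl r n) (h l), ?_, ?_⟩
    · intro b
      by_cases hb : b = ⟨a, h3, h4⟩
      · subst hb; rw [Pi.single_eq_same]; exact hh l h1 h2
      · rw [Pi.single_eq_of_ne hb]; exact Submodule.zero_mem _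
    · rw [Finset.sum_eq_single (⟨a, h3, h4⟩ : Sl r n)]
      · rw [Pi.single_eq_same]; rfl
      · intro b _ hb; rw [Pi.single_eq_of_ne hb, map_zero, zero_mul]
      · simp
  | zero => exact ⟨0, fun _ => Submodule.zero_mem _, by simp⟩
  | add x y _ _ hx hy =>
    obtain ⟨g, hg, rfl⟩ := hx
    obtain ⟨g', hg', rfl⟩ := hy
    refine ⟨g + g', fun a => Submodule.add_mem _ (hg a) (hg' a), ?_⟩
    rw [← Finset.sum_add_distrib]
    exact Finset.sum_congr rfl fun a _ => by rw [Pi.add_apply, map_add, add_mul]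
  | smul c x _ hx =>
    obtain ⟨g, hg, rfl⟩ := hx
    refine ⟨c • g, fun a => Submodule.smul_mem _ c (hg a), ?_⟩
    rw [Finset.smul_sum]
    exact Finset.sum_congr rfl fun a _ => by rw [Pi.smul_apply, map_smul, smul_mul_assoc]

end HL

open HL

/-- character of `F^{(k,r)}`: for every `n > k` and `m ≥ 0`, the dimension
of the space of polynomials in `F_n^{(k,r)}` homogeneous of degree `m` equals the number
of pairs `(λ, μ)` with `λ ∈ π_n` admissible, `μ ∈ π_n` `(r-1)`-slim, and
`(r-1)|λ| + |μ| = m`. -/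
theorem dim_Fkr_homogeneous_eq_card_pairs
    (k r : ℕ) (hk : 0 < k) (hr : 2 ≤ r) (hcop : Nat.Coprime (k + 1) (r - 1))
    (t q : ℂ) (ht : IsPrimitiveRoot t (k + 1)) (hq : IsPrimitiveRoot q (r - 1))
    (n m : ℕ) (hn : k < n) :
    Module.finrank ℂ
      ↥(Submodule.span ℂ {f : MvPolynomial (Fin n) ℂ |
          f.IsSymmetric ∧
          (∀ (s : ℕ → ℕ), (∀ i, s i ≤ r - 2) → ∀ (x : ℂ) (y : Fin n → ℂ),
            MvPolynomial.eval
              (fun j : Fin n => if (j : ℕ) = 0 then x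
                else if (j : ℕ) ≤ k then t ^ (j : ℕ) * q ^ (s (j : ℕ)) * x else y j)
              f = 0) ∧
          f.IsHomogeneous m})
    = Nat.card {p : (Fin n → ℕ) × (Fin n → ℕ) |
        Antitone p.1 ∧
        (∀ i : ℕ, (Finset.univ.filter fun a : Fin n => p.1 a = i).card ≤ k) ∧
        Antitone p.2 ∧ IsSlim r n p.2 ∧
        (r - 1) * (∑ a, p.1 a) + (∑ a, p.2 a) = m} := by
  classical
  have hr' : 0 < r - 1 := by omega
  have hτ : IsPrimitiveRoot (t ^ (r - 1)) (k + 1) := ht.pow_of_coprime _ hcop.symm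
  have ht0 : t ≠ 0 := ht.ne_zero (by omega)
  haveI : Finite (Sl r n) := Finite.of_injective _ (resid_inj (n := n) hr')
  haveI : Fintype (Sl r n) := Fintype.ofFinite _
  obtain ⟨h, hh⟩ := exists_h hk hn hτ
  set S : Set ((Fin n → ℕ) × (Fin n → ℕ)) := {p : (Fin n → ℕ) × (Fin n → ℕ) |
        Antitone p.1 ∧
        (∀ i : ℕ, (Finset.univ.filter fun a : Fin n => p.1 a = i).card ≤ k) ∧
        Antitone p.2 ∧ IsSlim r n p.2 ∧
        (r - 1) * (∑ a, p.1 a) + (∑ a, p.2 a) = m} with hS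
  have hLI : LinearIndependent ℂ (fun p : S => BB h (r - 1) p.1) :=
    li hr' (fun l hl => (hh l hl).2.2.1) S (fun p hp => ⟨hp.1, hp.2.2.1, hp.2.2.2.1⟩)
  have hhom : ∀ l a : Fin n → ℕ, Antitone l →
      (BB h (r - 1) (l, a)).IsHomogeneous ((r - 1) * (∑ i, l i) + ∑ i, a i) := fun l a hl =>
    (expand_hom (hh l hl).2.1).mul (M_hom a)
  have hvan : ∀ l a : Fin n → ℕ, Antitone l → Adm k l → ∀ z : Fin n → ℂ,
      Wheel k (t ^ (r - 1)) (fun j => z j ^ (r - 1)) → eval z (BB h (r - 1) (l, a)) = 0 := by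
    intro l a hl had z hz
    rw [BB, map_mul, eval_expand]
    have := (hh l hl).2.2.2.1 had _ hz
    have e : eval (z ^ (r - 1)) (h l) = 0 := this
    rw [e, zero_mul]
  have key : Submodule.span ℂ {f : MvPolynomial (Fin n) ℂ |
          f.IsSymmetric ∧ FW k r t q f ∧ f.IsHomogeneous m}
      = Submodule.span ℂ (Set.range (fun p : S => BB h (r - 1) p.1)) := by
    apply le_antisymm
    · rw [Submodule.span_le]
      rintro f ⟨hfs, hfw, hfh⟩
      rw [FW_iff hr hn ht0 hq] at hfw
      set SA : Set ((Fin n → ℕ) × (Fin n → ℕ)) :=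
        {p | Antitone p.1 ∧ Adm k p.1 ∧ Antitone p.2 ∧ IsSlim r n p.2} with hSA
      have h1 := span_sym (r := r) hr' h (fun l hl => ⟨(hh l hl).1, (hh l hl).2.2.1⟩) f hfs
      have hu : {p : (Fin n → ℕ) × (Fin n → ℕ) | Antitone p.1 ∧ Antitone p.2 ∧ IsSlim r n p.2} =
          SA ∪ {p | Antitone p.1 ∧ ¬ Adm k p.1 ∧ Antitone p.2 ∧ IsSlim r n p.2} := by
        ext p; simp only [hSA, Set.mem_setOf_eq, Set.mem_union]; tauto
      rw [hu, Set.image_union, Submodule.span_union, Submodule.mem_sup] at h1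
      obtain ⟨f1, hf1, f2, hf2, hf12⟩ := h1
      obtain ⟨g, hg, hg2⟩ := nonadm (k := k) hr'
        (fun l hl had => ⟨(hh l hl).1, (hh l hl).2.2.2.2 had⟩) f2 hf2
      have hf1w : ∀ z : Fin n → ℂ, Wheel k (t ^ (r - 1)) (fun j => z j ^ (r - 1)) →
          eval z f1 = 0 := by
        intro z hz
        have : Submodule.span ℂ (BB h (r - 1) '' SA) ≤ LinearMap.ker (aeval (R := ℂ) z).toLinearMap := by
          rw [Submodule.span_le]
          rintro _ ⟨⟨l, a⟩, hp, rfl⟩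
          have := hvan l a hp.1 hp.2.1 z hz
          simpa [aeval_eq_eval] using this
        have := this hf1
        simpa [aeval_eq_eval] using this
      have hg0 : ∀ a, g a = 0 := vanish hk hr hn hτ hq g (fun a => (hg a).1) (fun a => (hg a).2) (by
        intro z hz
        rw [← hg2]
        have := hfw z hz
        rw [← hf12, map_add, hf1w z hz, zero_add] at this
        exact this)
      have hf20 : f2 = 0 := by rw [hg2]; simp [hg0]
      rw [hf20, add_zero] at hf12
      subst hf12
      have hle : Submodule.span ℂ (BB h (r - 1) '' SA) ≤
          (Submodule.span ℂ (Set.range (fun p : S => BB h (r - 1) p.1))).comap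
            (homogeneousComponent m) := by
        rw [Submodule.span_le]
        rintro _ ⟨⟨l, a⟩, hp, rfl⟩
        show homogeneousComponent m (BB h (r - 1) (l, a)) ∈
          Submodule.span ℂ (Set.range (fun p : S => BB h (r - 1) p.1))
        rw [homogeneousComponent_of_mem ((mem_homogeneousSubmodule _ _).2 (hhom l a hp.1))]
        split_ifs with hm
        · exact Submodule.subset_span ⟨⟨(l, a), hp.1, hp.2.1, hp.2.2.1, hp.2.2.2, hm.symm⟩, rfl⟩
        · exact Submodule.zero_mem _
      have := hle hf1
      rw [Submodule.mem_comap, homogeneousComponent_of_mem ((mem_homogeneousSubmodule _ _).2 hfh),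
        if_pos rfl] at this
      exact this
    · apply Submodule.span_mono
      rintro _ ⟨⟨⟨l, a⟩, hp⟩, rfl⟩
      refine ⟨(expand_symm (hh l hp.1).1).mul (M_symm a), ?_, ?_⟩
      · rw [FW_iff hr hn ht0 hq]
        exact hvan l a hp.1 hp.2.1
      · have := hhom l a hp.1
        rw [hp.2.2.2.2] at this
        exact this
  change Module.finrank ℂ ↥(Submodule.span ℂ {f : MvPolynomial (Fin n) ℂ |
          f.IsSymmetric ∧ FW k r t q f ∧ f.IsHomogeneous m}) = _
  rw [key]
  exact Module.finrank_eq_nat_card_basis (Module.Basis.span hLI)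
end
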